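/- arXiv:2408.07411 — 2 statements merged into one kernel-verified Lean document; each statement's English description precedes it below -/
import Mathlib

section
/- Let Γ be a finite Abelian group of order a·b·c with a > 1 and b > 1, and suppose the exponent of Γ is not divisible by 8. Then a Γ-magic rectangle set MRS_Γ(a,b;c) exists if and only if either a and b are both even, or Γ belongs to the class 𝒢 and it is not the case that one of a, b equals 2 while the other is odd. -/
/-!
Necessity, when a side, say `a`, is odd: if `Γ` has exactly one involution `ι`, the sum of all
elements of `Γ` is `ι`, and it also equals `c b δ`; multiplying by `a` gives `ι = |Γ| δ = 0`. In a
`2 × b` rectangle with `b` odd, comparing row and column sums shows that `δ = 2y` for some `y`,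
and the two entries of the column containing `y` coincide.

For sufficiency it is enough to partition `Γ` into rectangles `a₀ × b₀` with `a₀ ∣ a` and `b₀ ∣ b`,
all with the same sums, and glue them (`Mag.resize`).

* Both sides even: `2 × 2` squares. If `ι` is an involution such that neither `ω` nor `ω + ι` is a
  double, the orbits `{x, ω - x, ω + ι - x, x + ι}` are magic squares with row sum `ω` and column
  sum `ω + ι`. Such a pair exists as soon as `4 ∣ |Γ|` (`exists_not_double`).
* Lifting: suppose that `X` carries rectangles and every element of a larger set is uniquely
  `x + T q` with `x ∈ X`. Adding increments `T (π q)` that cancel in every row and column gives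
  rectangles for the larger set. Increments for sides of any size `≥ 2` come from a pairing
  `T q, -T q` and a triple of permutations with zero sum (`Mag.lift_symm`). Transversals
  `{-k, …, k}` of a cyclic group of odd order have both, hence rectangles on a subgroup of odd index
  extend to the whole group (`Mag.extend_odd`).
* Odd order: take primes `p ∣ a` and `q ∣ b`, write down a `p × q` rectangle on a subgroup of order
  `p q`, and extend.
* Even order, `a` odd: as `8` does not divide the exponent, `Γ = P ⊕ O` with `4 P = 0` and `O` of odd
  order, and `P` has at least two involutions. If `b` is odd, or twice an odd number `> 1`, the
  rectangles of `O` are lifted by means of a zero-sum triple of permutations of `P`. If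
  `4 ∣ b`, take a prime `p ∣ a`; rectangles `p × 4` on `P × ℤ/p` are extended along an odd index.

The zero-sum triples and the `p × 4` rectangles for `P × ℤ/p` are found by induction on `|P|`. A
large `P` contains a subgroup `K` of the same kind with `P / K` a Klein four-group, over which one
lifts, and the small groups `P` are settled by explicit tables with `p = 3`, or with `p = 5` if `P`
is elementary. The tables are written over an interval `{-k, …, k}` of integers instead of `ℤ/p`;
passing from `k` to `k + 1` adds two rows consisting of `2 × 2` squares with row sum `0`
(`HasRect.succ`), and this reaches every odd `p`. For elementary `P` and `p = 3` the tables are over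
`ℤ/3` directly.
-/

/-- `Γ` belongs to the class `𝒢`: its order is odd or it has more than one involution. -/
def InClassG (Γ : Type*) [AddCommGroup Γ] [Fintype Γ] : Prop :=
  Odd (Fintype.card Γ) ∨ 1 < Nat.card {g : Γ // g ≠ 0 ∧ g + g = 0}

/-- A `Γ`-magic rectangle set `MRS_Γ(a, b; c)`. -/
def IsMagicRectangleSet (Γ : Type*) [AddCommGroup Γ] [Fintype Γ] (a b c : ℕ) : Prop :=
  ∃ (x : Fin c × Fin a × Fin b → Γ) (ω δ : Γ),
    Function.Bijective x ∧
    (∀ (s : Fin c) (i : Fin a), ∑ j : Fin b, x (s, i, j) = ω) ∧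
    (∀ (s : Fin c) (j : Fin b), ∑ i : Fin a, x (s, i, j) = δ)

/-! ### Sets of magic rectangles inside a group -/

/-- `Mag X n a b ω δ`: the set `X` is cut into `n` rectangles of size `a × b` without repetition,
all of whose rows sum to `ω` and all of whose columns sum to `δ`. Working with subsets `X` of a
fixed group makes it possible to glue and translate rectangle sets. -/
def Mag {G : Type*} [AddCommGroup G] (X : Set G) (n a b : ℕ) (ω δ : G) : Prop :=
  ∃ x : Fin n × Fin a × Fin b → G, Function.Injective x ∧ Set.range x = X ∧
    (∀ s i, ∑ j, x (s, i, j) = ω) ∧ ∀ s j, ∑ i, x (s, i, j) = δ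

namespace Mag

variable {G H : Type*} [AddCommGroup G] [AddCommGroup H]

lemma of_fintype {S : Type*} [Fintype S] {X : Set G} {a b : ℕ} {ω δ : G}
    (x : S × Fin a × Fin b → G) (hx : Function.Injective x) (hX : Set.range x = X)
    (hr : ∀ s i, ∑ j, x (s, i, j) = ω) (hc : ∀ s j, ∑ i, x (s, i, j) = δ) :
    Mag X (Fintype.card S) a b ω δ := by
  let e := (Fintype.equivFin S).symm
  refine ⟨fun t => x (e t.1, t.2), ?_, ?_, fun s i => hr (e s) i, fun s j => hc (e s) j⟩
  · exact hx.comp (e.prodCongr (Equiv.refl (Fin a × Fin b))).injective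
  · rw [← hX]
    exact (e.prodCongr (Equiv.refl (Fin a × Fin b))).surjective.range_comp x

lemma ncard {X : Set G} {n a b : ℕ} {ω δ : G} (h : Mag X n a b ω δ) :
    X.ncard = n * (a * b) := by
  obtain ⟨x, hx, rfl, -, -⟩ := h
  rw [← Set.image_univ, Set.ncard_image_of_injective _ hx, Set.ncard_univ]
  simp

lemma of_card {S : Type*} [Fintype S] {X : Set G} {a b : ℕ} {ω δ : G}
    (x : S × Fin a × Fin b → G) (hx : Function.Injective x) (hX : ∀ t, x t ∈ X)
    (hfin : X.Finite) (hcard : X.ncard ≤ Fintype.card S * (a * b))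
    (hr : ∀ s i, ∑ j, x (s, i, j) = ω) (hc : ∀ s j, ∑ i, x (s, i, j) = δ) :
    Mag X (Fintype.card S) a b ω δ := by
  refine of_fintype x hx ?_ hr hc
  refine Set.eq_of_subset_of_ncard_le (by rintro _ ⟨t, rfl⟩; exact hX t) ?_ hfin
  rw [← Set.image_univ, Set.ncard_image_of_injective _ hx, Set.ncard_univ]
  simpa using hcard

lemma map {X : Set G} {n a b : ℕ} {ω δ : G} (h : Mag X n a b ω δ) (f : G →+ H)
    (hf : Set.InjOn f X) : Mag (f '' X) n a b (f ω) (f δ) := by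
  obtain ⟨x, hx, rfl, hr, hc⟩ := h
  refine ⟨f ∘ x, ?_, Set.range_comp f x, fun s i => ?_, fun s j => ?_⟩
  · intro t t' htt
    exact hx (hf ⟨t, rfl⟩ ⟨t', rfl⟩ htt)
  · simp [← map_sum, hr]
  · simp [← map_sum, hc]

lemma transpose {X : Set G} {n a b : ℕ} {ω δ : G} (h : Mag X n a b ω δ) :
    Mag X n b a δ ω := by
  obtain ⟨x, hx, rfl, hr, hc⟩ := h
  let e : Fin n × Fin b × Fin a ≃ Fin n × Fin a × Fin b :=
    (Equiv.refl _).prodCongr (Equiv.prodComm _ _)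
  exact ⟨x ∘ e, hx.comp e.injective, e.surjective.range_comp x, fun s i => hc s i,
    fun s j => hr s j⟩

/-- Stacking `k` rectangles on top of one another. -/
lemma stack {X : Set G} {n a b k : ℕ} {ω δ : G} (h : Mag X (n * k) a b ω δ) :
    Mag X n (k * a) b ω (k • δ) := by
  obtain ⟨x, hx, rfl, hr, hc⟩ := h
  let e : Fin n × Fin (k * a) × Fin b ≃ Fin (n * k) × Fin a × Fin b :=
    ((Equiv.refl _).prodCongr ((finProdFinEquiv.symm.prodCongr (Equiv.refl _)).trans
      (Equiv.prodAssoc _ _ _))).trans ((Equiv.prodAssoc _ _ _).symm.trans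
        (finProdFinEquiv.prodCongr (Equiv.refl _)))
  refine ⟨x ∘ e, hx.comp e.injective, e.surjective.range_comp x, fun s i =>
    hr (finProdFinEquiv (s, (finProdFinEquiv.symm i).1)) (finProdFinEquiv.symm i).2,
    fun s j => ?_⟩
  rw [← finProdFinEquiv.sum_comp]
  have : ∀ t : Fin k × Fin a, (x ∘ e) (s, finProdFinEquiv t, j) =
      x (finProdFinEquiv (s, t.1), t.2, j) := fun t => by simp [e]
  simp only [this, Fintype.sum_prod_type, hc]
  simp

lemma empty {a b : ℕ} {ω δ : G} : Mag (∅ : Set G) 0 a b ω δ :=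
  ⟨fun t => t.1.elim0, fun t => t.1.elim0, by
    ext; simp, fun s => s.elim0, fun s => s.elim0⟩

/-- Disjoint unions of rectangle sets with the same sums. -/
lemma union {X Y : Set G} {n m a b : ℕ} {ω δ : G} (h : Mag X n a b ω δ)
    (h' : Mag Y m a b ω δ) (hd : Disjoint X Y) : Mag (X ∪ Y) (n + m) a b ω δ := by
  obtain ⟨x, hx, rfl, hr, hc⟩ := h
  obtain ⟨y, hy, rfl, hr', hc'⟩ := h'
  have hd' : ∀ t t', x t ≠ y t' := fun t t' e =>
    Set.disjoint_left.1 hd ⟨t, rfl⟩ ⟨t', e.symm⟩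
  have := of_fintype (S := Fin n ⊕ Fin m) (X := Set.range x ∪ Set.range y) (ω := ω) (δ := δ)
    (fun t => Sum.elim (fun s => x (s, t.2)) (fun s => y (s, t.2)) t.1) ?_ ?_ ?_ ?_
  · simpa using this
  · rintro ⟨s | s, t⟩ ⟨s' | s', t'⟩ e
    · have := hx e; simp_all
    · exact (hd' _ _ e).elim
    · exact (hd' _ _ e.symm).elim
    · have := hy e; simp_all
  · ext z
    simp [Sum.exists]
  · rintro (s | s) i
    · exact hr s i
    · exact hr' s i
  · rintro (s | s) i
    · exact hc s i
    · exact hc' s i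

/-- Placing each rectangle of one set on top of a rectangle of the other. -/
lemma vunion {X Y : Set G} {n a a' b : ℕ} {ω δ δ' : G} (h : Mag X n a b ω δ)
    (h' : Mag Y n a' b ω δ') (hd : Disjoint X Y) : Mag (X ∪ Y) n (a + a') b ω (δ + δ') := by
  obtain ⟨x, hx, rfl, hr, hc⟩ := h
  obtain ⟨y, hy, rfl, hr', hc'⟩ := h'
  have hd' : ∀ t t', x t ≠ y t' := fun t t' e =>
    Set.disjoint_left.1 hd ⟨t, rfl⟩ ⟨t', e.symm⟩
  refine ⟨fun t => Fin.addCases (fun i => x (t.1, i, t.2.2)) (fun i => y (t.1, i, t.2.2)) t.2.1,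
    ?_, ?_, ?_, ?_⟩
  · rintro ⟨s, i, j⟩ ⟨s', i', j'⟩ e
    induction i using Fin.addCases <;> induction i' using Fin.addCases <;> simp at e
    · have := hx e; simp_all
    · exact (hd' _ _ e).elim
    · exact (hd' _ _ e.symm).elim
    · have := hy e; simp_all
  · ext z
    constructor
    · rintro ⟨⟨s, i, j⟩, rfl⟩
      induction i using Fin.addCases
      · left; simp
      · right; simp
    · rintro (⟨⟨s, i, j⟩, rfl⟩ | ⟨⟨s, i, j⟩, rfl⟩)
      · exact ⟨(s, Fin.castAdd _ i, j), by simp⟩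
      · exact ⟨(s, Fin.natAdd _ i, j), by simp⟩
  · intro s i
    induction i using Fin.addCases
    · simp [hr]
    · simp [hr']
  · intro s j
    simp [Fin.sum_univ_add, hc, hc']

end Mag

/-! ### Lifting along a transversal -/

/-- If every element of the target is uniquely `x + T q` with `x ∈ X`, a rectangle set on `X` is
lifted by adding `T (π i j q)` in position `(i, j)`, provided that these increments cancel in each
row and column. -/
lemma Mag.lift {G : Type*} [AddCommGroup G] {X : Set G} {n a b : ℕ} {ω δ : G}
    (h : Mag X n a b ω δ) {Q : Type*} [Fintype Q] (T : Q → G)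
    (hT : ∀ x ∈ X, ∀ x' ∈ X, ∀ q q', x + T q = x' + T q' → q = q')
    (π : Fin a → Fin b → Equiv.Perm Q) (hr : ∀ i q, ∑ j, T (π i j q) = 0)
    (hc : ∀ j q, ∑ i, T (π i j q) = 0) :
    Mag {y | ∃ x ∈ X, ∃ q, x + T q = y} (n * Fintype.card Q) a b ω δ := by
  obtain ⟨x, hx, rfl, hr', hc'⟩ := h
  have := Mag.of_fintype (S := Fin n × Q) (X := {y | ∃ z ∈ Set.range x, ∃ q, z + T q = y})
    (ω := ω) (δ := δ)
    (fun t => x (t.1.1, t.2) + T (π t.2.1 t.2.2 t.1.2)) ?_ ?_ ?_ ?_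
  · simpa using this
  · rintro ⟨⟨s, q⟩, i, j⟩ ⟨⟨s', q'⟩, i', j'⟩ e
    simp only at e
    have hq := hT _ ⟨_, rfl⟩ _ ⟨_, rfl⟩ _ _ e
    rw [hq, add_left_inj] at e
    have := hx e
    simp only [Prod.mk.injEq] at this
    obtain ⟨rfl, rfl, rfl⟩ := this
    simpa using hq
  · ext y
    constructor
    · rintro ⟨⟨⟨s, q⟩, i, j⟩, rfl⟩
      exact ⟨_, ⟨_, rfl⟩, _, rfl⟩
    · rintro ⟨_, ⟨⟨s, i, j⟩, rfl⟩, q, rfl⟩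
      exact ⟨((s, (π i j).symm q), i, j), by simp⟩
  · rintro ⟨s, q⟩ i
    simp [Finset.sum_add_distrib, hr', hr]
  · rintro ⟨s, q⟩ i
    simp [Finset.sum_add_distrib, hc', hc]

/-- Signs and residues modulo `3` of length `m` that annihilate every zero-sum triple: one
run through the triple if `m` is odd, and otherwise terms cancelling in pairs. -/
lemma exists_balanced.{u} (m : ℕ) (hm : 2 ≤ m) : ∃ (s : Fin m → ℤˣ) (c : Fin m → ZMod 3),
    ∀ (G : Type u) [AddCommGroup G] (g : ZMod 3 → G), ∑ k, g k = 0 →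
      ∑ i, ((s i : ℤˣ) : ℤ) • g (c i) = 0 := by
  induction m using Nat.strong_induction_on with
  | _ m ih =>
  obtain rfl | rfl | hm' : m = 2 ∨ m = 3 ∨ 4 ≤ m := by omega
  · exact ⟨![1, -1], ![0, 0], fun G _ g _ => by simp [Fin.sum_univ_two]⟩
  · refine ⟨fun _ => 1, ![0, 1, 2], fun G _ g hg => ?_⟩
    have : ∑ k : ZMod 3, g k = g 0 + g 1 + g 2 := Fin.sum_univ_three (f := g)
    rw [this] at hg
    simpa [Fin.sum_univ_three] using hg
  · obtain ⟨m, rfl⟩ := Nat.exists_eq_add_of_le' (show 2 ≤ m by omega)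
    obtain ⟨s, c, h⟩ := ih m (by omega) (by omega)
    refine ⟨Fin.cons 1 (Fin.cons (-1) s), Fin.cons 0 (Fin.cons 0 c), fun G _ g hg => ?_⟩
    simp [Fin.sum_univ_succ, h G g hg]

/-- Lifting to rectangles of arbitrary size, when the transversal `T` is symmetric and carries a
zero-sum triple of permutations. -/
lemma Mag.lift_symm {G : Type*} [AddCommGroup G] {X : Set G} {n a b : ℕ} {ω δ : G}
    (h : Mag X n a b ω δ) (ha : 2 ≤ a) (hb : 2 ≤ b) {Q : Type*} [Fintype Q] (T : Q → G)
    (hT : ∀ x ∈ X, ∀ x' ∈ X, ∀ q q', x + T q = x' + T q' → q = q')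
    (ρ : Equiv.Perm Q) (hρ : ∀ q, T (ρ q) = -T q)
    (π : ZMod 3 → Equiv.Perm Q) (hπ : ∀ q, ∑ k, T (π k q) = 0) :
    Mag {y | ∃ x ∈ X, ∃ q, x + T q = y} (n * Fintype.card Q) a b ω δ := by
  obtain ⟨s, c, hsc⟩ := exists_balanced a ha
  obtain ⟨s', c', hsc'⟩ := exists_balanced b hb
  let σ : ℤˣ → Equiv.Perm Q := fun e => if e = 1 then 1 else ρ
  have hσ : ∀ e q, T (σ e q) = ((e : ℤˣ) : ℤ) • T q := by
    intro e q
    rcases Int.units_eq_one_or e with rfl | rfl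
    · simp [σ]
    · simp [σ, hρ]
  refine h.lift T hT (fun i j => (π (c i + c' j)).trans (σ (s i * s' j))) ?_ ?_
  · intro i q
    have := hsc' G (fun k => T (π (c i + k) q))
      (by rw [← hπ q]; exact Equiv.sum_comp (Equiv.addLeft (c i)) (fun k => T (π k q)))
    simp [hσ, mul_smul, ← Finset.smul_sum, this]
  · intro j q
    have := hsc G (fun k => T (π (k + c' j) q))
      (by rw [← hπ q]; exact Equiv.sum_comp (Equiv.addRight (c' j)) (fun k => T (π k q)))
    simp [hσ, mul_comm (s _), mul_smul, ← Finset.smul_sum, this]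

/-- `G` has three permutations whose pointwise sum vanishes. -/
def HasTriple (G : Type*) [AddCommGroup G] : Prop :=
  ∃ π : ZMod 3 → Equiv.Perm G, ∀ q, ∑ k, π k q = 0

/-- Lifting from the first factor to a product whose second factor has a zero-sum triple of
permutations. -/
lemma Mag.lift_hom {G K : Type*} [AddCommGroup G] [AddCommGroup K] [Fintype K] {X : Set G}
    {n a b : ℕ} {ω δ : G}
    (h : Mag X n a b ω δ) (ha : 2 ≤ a) (hb : 2 ≤ b) (T : K →+ G)
    (hT : ∀ x ∈ X, ∀ x' ∈ X, ∀ q q', x + T q = x' + T q' → q = q') (hK : HasTriple K) :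
    Mag {y | ∃ x ∈ X, ∃ q, x + T q = y} (n * Fintype.card K) a b ω δ := by
  obtain ⟨π, hπ⟩ := hK
  exact h.lift_symm ha hb T hT (Equiv.neg K) (by simp) π (fun q => by rw [← map_sum, hπ, map_zero])

/-- Three permutations of `{-k, …, k}` with zero sum; the element `t - k` is coded by `t`. -/
lemma exists_kotzig (k : ℕ) : ∃ π : ZMod 3 → Equiv.Perm (Fin (2 * k + 1)),
    ∀ t, ∑ c, (((π c t : Fin (2 * k + 1)) : ℤ) - k) = 0 := by
  have mk : ∀ f : Fin (2 * k + 1) → Fin (2 * k + 1), Function.Injective f →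
      ∃ e : Equiv.Perm (Fin (2 * k + 1)), ∀ t, e t = f t := fun f hf =>
    ⟨Equiv.ofBijective f (Finite.injective_iff_bijective.1 hf), fun t => rfl⟩
  -- in terms of `t`, the three values are `t - k`, then `-t/2` or `k - (t-1)/2`, then minus the sum
  obtain ⟨e₁, h₁⟩ := mk (fun t => ⟨if (t : ℕ) % 2 = 0 then k - t / 2 else 2 * k - (t - 1) / 2, by
    have := t.2; split_ifs <;> omega⟩) (by
      intro t t' h
      have := t.2; have := t'.2
      simp only [Fin.mk.injEq] at h
      ext
      split_ifs at h <;> omega)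
  obtain ⟨e₂, h₂⟩ := mk (fun t => ⟨if (t : ℕ) % 2 = 0 then 2 * k - t / 2 else k - (t + 1) / 2, by
    have := t.2; split_ifs <;> omega⟩) (by
      intro t t' h
      have := t.2; have := t'.2
      simp only [Fin.mk.injEq] at h
      ext
      split_ifs at h <;> omega)
  refine ⟨![Equiv.refl _, e₁, e₂], fun t => ?_⟩
  have := t.2
  refine (Fin.sum_univ_three _).trans ?_
  simp only [Matrix.cons_val_zero, Matrix.cons_val_one, Matrix.cons_val, h₁, h₂,
    Equiv.refl_apply]
  split_ifs <;> omega

/-! ### Extension along a subgroup of odd index -/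

/-- The increments are the multiples `t • h` with `-k ≤ t ≤ k`, a symmetric transversal of the cyclic
subgroup generated by `h` in the quotient. -/
lemma Mag.extend_prime {Γ : Type*} [AddCommGroup Γ] [Finite Γ] {H : AddSubgroup Γ} {n a b : ℕ}
    {ω δ : Γ} (hM : Mag (H : Set Γ) n a b ω δ) (ha : 2 ≤ a) (hb : 2 ≤ b) (k : ℕ) (h : Γ)
    (hh : addOrderOf (QuotientAddGroup.mk h : Γ ⧸ H) = 2 * k + 1) :
    ∃ n', Mag (((AddSubgroup.zmultiples (QuotientAddGroup.mk h : Γ ⧸ H)).comap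
      (QuotientAddGroup.mk' H) : AddSubgroup Γ) : Set Γ) n' a b ω δ := by
  obtain ⟨π, hπ⟩ := exists_kotzig k
  have key : ∀ z : ℤ, z • h ∈ H ↔ ((2 * k + 1 : ℕ) : ℤ) ∣ z := by
    intro z
    rw [← hh, addOrderOf_dvd_iff_zsmul_eq_zero, ← QuotientAddGroup.mk_zsmul,
      QuotientAddGroup.eq_zero_iff]
  have := hM.lift_symm ha hb (fun t : Fin (2 * k + 1) => ((t : ℤ) - k) • h) ?_
    Fin.revPerm ?_ π ?_
  · refine ⟨_, (congrArg (fun S => Mag S _ a b ω δ) ?_).mp this⟩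
    ext y
    simp only [Set.mem_ofPred_eq, AddSubgroup.coe_comap, Set.mem_preimage, SetLike.mem_coe,
      AddSubgroup.mem_zmultiples_iff, QuotientAddGroup.mk'_apply, ← QuotientAddGroup.mk_zsmul]
    constructor
    · rintro ⟨x, hx, t, rfl⟩
      exact ⟨(t : ℤ) - k, by
        rw [QuotientAddGroup.mk_add, (QuotientAddGroup.eq_zero_iff x).2 hx, zero_add]⟩
    · rintro ⟨z, hz⟩
      have hm : 0 ≤ (z + k) % ((2 * k + 1 : ℕ) : ℤ) := Int.emod_nonneg _ (by omega)
      have hm' : (z + k) % ((2 * k + 1 : ℕ) : ℤ) < (2 * k + 1 : ℕ) := Int.emod_lt_of_pos _ (by omega)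
      refine ⟨y - ((z + k) % ((2 * k + 1 : ℕ) : ℤ) - k) • h, ?_,
        ⟨((z + k) % ((2 * k + 1 : ℕ) : ℤ)).toNat, by omega⟩, ?_⟩
      · have h1 : y - z • h ∈ H := by
          rw [← QuotientAddGroup.eq_zero_iff, QuotientAddGroup.mk_sub, hz, sub_self]
        have h2 : (z - ((z + k) % ((2 * k + 1 : ℕ) : ℤ) - k)) • h ∈ H := by
          rw [key, show z - ((z + k) % ((2 * k + 1 : ℕ) : ℤ) - k) =
            (z + k) - (z + k) % ((2 * k + 1 : ℕ) : ℤ) by ring]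
          exact Int.dvd_self_sub_emod
        have := H.add_mem h1 h2
        rwa [sub_smul, sub_add_sub_cancel] at this
      · rw [Int.toNat_of_nonneg hm, sub_add_cancel]
  · intro x hx x' hx' q q' e
    have h1 : ((q : ℤ) - q') • h ∈ H := by
      have : ((q : ℤ) - q') • h = x' - x := by
        have e' : ((q : ℤ) - k) • h - ((q' : ℤ) - k) • h = x' - x := by
          rw [sub_eq_sub_iff_add_eq_add, add_comm, e]
        rw [← e', ← sub_smul]; congr 1; ring
      rw [this]; exact H.sub_mem hx' hx
    rw [key] at h1
    have := q.2; have := q'.2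
    have := Int.eq_zero_of_abs_lt_dvd h1 (by rw [abs_lt]; omega)
    ext; omega
  · intro t
    rw [← neg_zsmul]
    congr 1
    simp [Fin.val_rev]
    have := t.2
    omega
  · intro t
    rw [← Finset.sum_smul, hπ, zero_zsmul]

/-- A rectangle set on a subgroup of odd index extends to the whole group. -/
lemma Mag.extend_odd {Γ : Type*} [AddCommGroup Γ] [Finite Γ] {H : AddSubgroup Γ} {n a b : ℕ}
    {ω δ : Γ} (hM : Mag (H : Set Γ) n a b ω δ) (ha : 2 ≤ a) (hb : 2 ≤ b) (hodd : Odd H.index) :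
    ∃ n', Mag (Set.univ : Set Γ) n' a b ω δ := by
  induction hi : H.index using Nat.strong_induction_on generalizing H n with
  | _ m ih =>
  subst hi
  by_cases h1 : H.index = 1
  · rw [AddSubgroup.index_eq_one] at h1
    subst h1
    exact ⟨n, by simpa using hM⟩
  obtain ⟨p, hp, hpd⟩ := Nat.exists_prime_and_dvd h1
  obtain ⟨k, rfl⟩ := hodd.of_dvd_nat hpd
  have : Fact (2 * k + 1).Prime := ⟨hp⟩
  obtain ⟨q, hq⟩ := exists_prime_addOrderOf_dvd_card' (G := Γ ⧸ H) (2 * k + 1) hpd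
  obtain ⟨h, rfl⟩ := QuotientAddGroup.mk_surjective q
  obtain ⟨n', hM'⟩ := hM.extend_prime ha hb k h hq
  set H' := (AddSubgroup.zmultiples (QuotientAddGroup.mk h : Γ ⧸ H)).comap
      (QuotientAddGroup.mk' H) with hH'
  have hle : H ≤ H' := by
    intro x hx
    rw [hH', AddSubgroup.mem_comap, QuotientAddGroup.mk'_apply,
      (QuotientAddGroup.eq_zero_iff x).2 hx]
    exact zero_mem _
  have hh : h ∈ H' := by
    rw [hH', AddSubgroup.mem_comap]
    exact AddSubgroup.mem_zmultiples _
  have hmul := AddSubgroup.relIndex_mul_index hle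
  have hne : H.relIndex H' ≠ 1 := by
    rw [Ne, AddSubgroup.relIndex_eq_one]
    intro hle'
    have := (QuotientAddGroup.eq_zero_iff h).2 (hle' hh)
    rw [this, addOrderOf_zero] at hq
    exact hp.one_lt.ne hq
  refine ih H'.index ?_ hM' (hodd.of_dvd_nat ⟨_, by rw [← hmul, mul_comm]⟩) rfl
  have hpos : H.index ≠ 0 := AddSubgroup.index_ne_zero_of_finite
  rw [← hmul] at hpos ⊢
  have h1 : H.relIndex H' ≠ 0 := by rintro h; simp [h] at hpos
  have h2 : H'.index ≠ 0 := by rintro h; simp [h] at hpos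
  have : 2 ≤ H.relIndex H' := by omega
  nlinarith [Nat.pos_of_ne_zero h2]

/-! ### Squares, and rectangles with both sides even -/

lemma injective_square {α : Type*} {p q r s : α} (h1 : p ≠ q) (h2 : p ≠ r) (h3 : p ≠ s)
    (h4 : q ≠ r) (h5 : q ≠ s) (h6 : r ≠ s) :
    Function.Injective fun t : Fin 2 × Fin 2 => ![![p, q], ![r, s]] t.1 t.2 := by
  rintro ⟨i, j⟩ ⟨i', j'⟩ h
  fin_cases i <;> fin_cases i' <;> fin_cases j <;> fin_cases j' <;>
    first
      | rfl
      | exact absurd h (by assumption)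
      | exact absurd h.symm (by assumption)

/-- The four-element orbits `{x, ω - x, ω + ι - x, x + ι}` are magic `2 × 2` squares. -/
lemma exists_mag_two_two {G : Type*} [AddCommGroup G] {ω ι : G} (hι : ι ≠ 0) (hι2 : ι + ι = 0)
    (Y : Finset G) (h1 : ∀ x ∈ Y, x + ι ∈ Y) (h2 : ∀ x ∈ Y, ω - x ∈ Y)
    (h3 : ∀ x ∈ Y, x + x ≠ ω) (h4 : ∀ x ∈ Y, x + x ≠ ω + ι) :
    ∃ n, Mag (Y : Set G) n 2 2 ω (ω + ι) := by
  classical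
  induction hc : Y.card using Nat.strong_induction_on generalizing Y with
  | _ m ih =>
  obtain rfl | ⟨x, hx⟩ := Y.eq_empty_or_nonempty
  · exact ⟨0, by simpa using Mag.empty⟩
  have hneg : -ι = ι := neg_eq_of_add_eq_zero_left hι2
  let O : Finset G := {x, ω - x, ω + ι - x, x + ι}
  have hO : O ⊆ Y := by
    intro y
    simp only [O, Finset.mem_insert, Finset.mem_singleton]
    rintro (rfl | rfl | rfl | rfl)
    · exact hx
    · exact h2 _ hx
    · rw [add_sub_right_comm]; exact h1 _ (h2 _ hx)
    · exact h1 _ hx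
  have hxO : x ∈ O := by simp [O]
  have hO1 : ∀ y, y + ι ∈ O → y ∈ O := by
    intro y
    simp only [O, Finset.mem_insert, Finset.mem_singleton]
    rintro (h | h | h | h)
    · right; right; right; rw [← h, add_assoc, hι2, add_zero]
    · right; right; left; rw [add_sub_right_comm, ← h, add_assoc, hι2, add_zero]
    · right; left; rw [add_sub_right_comm] at h; exact add_right_cancel h
    · left; exact add_right_cancel h
  have hO2 : ∀ y, ω - y ∈ O → y ∈ O := by
    intro y
    simp only [O, Finset.mem_insert, Finset.mem_singleton]
    rintro (h | h | h | h)
    · right; left; rw [← h]; abel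
    · left; exact sub_right_injective h
    · right; right; right
      have : y = ω - (ω + ι - x) := by rw [← h]; abel
      rw [this, show ω - (ω + ι - x) = x + -ι by abel, hneg]
    · right; right; left
      have : y = ω - (x + ι) := by rw [← h]; abel
      rw [this, show ω - (x + ι) = ω + -ι - x by abel, hneg]
  obtain ⟨n, hn⟩ := ih (Y \ O).card (by
      rw [← hc]; exact Finset.card_lt_card
        (Finset.ssubset_iff_of_subset Finset.sdiff_subset |>.2 ⟨x, hx, by simp [hxO]⟩)) (Y \ O)
    (fun y hy => by
      rw [Finset.mem_sdiff] at hy ⊢; exact ⟨h1 _ hy.1, fun h => hy.2 (hO1 _ h)⟩)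
    (fun y hy => by
      rw [Finset.mem_sdiff] at hy ⊢; exact ⟨h2 _ hy.1, fun h => hy.2 (hO2 _ h)⟩)
    (fun y hy => h3 _ (Finset.mem_sdiff.1 hy).1) (fun y hy => h4 _ (Finset.mem_sdiff.1 hy).1) rfl
  have hblock : Mag (O : Set G) 1 2 2 ω (ω + ι) := by
    have e1 : x ≠ ω - x := fun h => h3 x hx (by nth_rewrite 2 [h]; abel)
    have e2 : x ≠ ω + ι - x := fun h => h4 x hx (by nth_rewrite 2 [h]; abel)
    have e3 : x ≠ x + ι := fun h => hι (by simpa using h.symm)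
    have e4 : ω - x ≠ ω + ι - x := fun h => hι (by
      rw [add_sub_right_comm] at h; simpa using h.symm)
    have e5 : ω - x ≠ x + ι := fun h => h4 x hx (by
      rw [sub_eq_iff_eq_add] at h
      rw [h, show x + ι + x + ι = x + x + (ι + ι) by abel, hι2, add_zero])
    have e6 : ω + ι - x ≠ x + ι := fun h => h3 x hx (by
      rw [add_sub_right_comm] at h
      have := add_right_cancel h
      rw [sub_eq_iff_eq_add] at this
      exact this.symm)
    have := Mag.of_fintype (S := Fin 1) (X := (O : Set G)) (a := 2) (b := 2) (ω := ω)
      (δ := ω + ι)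
      (fun t => ![![x, ω - x], ![ω + ι - x, x + ι]] t.2.1 t.2.2) ?_ ?_ ?_ ?_
    · simpa using this
    · rintro ⟨s, i, j⟩ ⟨s', i', j'⟩ h
      obtain rfl := Subsingleton.elim s s'
      have := injective_square e1 e2 e3 e4 e5 e6 (a₁ := (i, j)) (a₂ := (i', j')) h
      rw [this]
    · ext y
      simp [O, Prod.exists, Fin.exists_fin_two, eq_comm, or_assoc]
    · intro s i
      fin_cases i
      · simp
      · simp only [Fin.sum_univ_two]
        simp
        rw [show ω + ι - x + (x + ι) = ω + (ι + ι) by abel, hι2, add_zero]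
    · intro s j
      fin_cases j
      · simp
      · simp [Fin.sum_univ_two]
        abel
  refine ⟨1 + n, ?_⟩
  have := hblock.union hn (by
    rw [Finset.disjoint_coe]; exact Finset.disjoint_sdiff)
  rwa [← Finset.coe_union, Finset.union_sdiff_of_subset hO] at this

/-- The orders of the image and the kernel of multiplication by `m`. -/
lemma card_double_mul {Γ : Type*} [AddCommGroup Γ] [Finite Γ] (m : ℕ) :
    Nat.card (nsmulAddMonoidHom (α := Γ) m).range *
      Nat.card (nsmulAddMonoidHom (α := Γ) m).ker = Nat.card Γ := by
  rw [← AddSubgroup.index_ker, mul_comm, AddSubgroup.card_mul_index]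

/-- If `4` divides the order, some coset of a subgroup `{0, ι}` of order two contains no double. When
there is an element `y` of order four, take `ι = y + y`: the doubles form a union of cosets.
Otherwise the number of doubles is at most a quarter of the order. -/
lemma exists_not_double {Γ : Type*} [AddCommGroup Γ] [Finite Γ] (h4 : 4 ∣ Nat.card Γ) :
    ∃ ι ω : Γ, ι ≠ 0 ∧ ι + ι = 0 ∧ ∀ x : Γ, x + x ≠ ω ∧ x + x ≠ ω + ι := by
  have h2 : Fact (Nat.Prime 2) := ⟨Nat.prime_two⟩
  by_cases hD : ∃ y : Γ, y + y ≠ 0 ∧ (y + y) + (y + y) = 0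
  · obtain ⟨y, hy, hy2⟩ := hD
    have hns : ¬ Function.Surjective fun x : Γ => x + x := by
      intro hs
      have := (Finite.injective_iff_surjective.2 hs) (a₁ := y + y) (a₂ := 0) (by simp [hy2])
      exact hy this
    simp only [Function.Surjective, not_forall, not_exists] at hns
    obtain ⟨ω, hω⟩ := hns
    refine ⟨y + y, ω, hy, hy2, fun x => ⟨hω x, fun h => hω (x - y) ?_⟩⟩
    rw [show x - y + (x - y) = (x + x) - (y + y) by abel, h, add_sub_cancel_right]
  · obtain ⟨ι, hι⟩ := exists_prime_addOrderOf_dvd_card' (G := Γ) 2 (dvd_trans (by norm_num) h4)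
    have hι0 : ι ≠ 0 := by rintro rfl; simp at hι
    have hι2 : ι + ι = 0 := by rw [← two_nsmul, ← hι, addOrderOf_nsmul_eq_zero]
    set D := (nsmulAddMonoidHom (α := Γ) 2).range with hDdef
    have hodd : ¬ 2 ∣ Nat.card D := by
      intro h
      obtain ⟨⟨z, y, rfl⟩, hz⟩ := exists_prime_addOrderOf_dvd_card' (G := D) 2 h
      refine hD ⟨y, ?_, ?_⟩
      · intro h0
        have : (⟨_, y, rfl⟩ : D) = 0 := by ext; simpa [two_nsmul] using h0
        rw [this] at hz; simp at hz
      · have := addOrderOf_nsmul_eq_zero (⟨_, y, rfl⟩ : D)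
        rw [hz] at this
        have := congrArg Subtype.val this
        simpa [two_nsmul] using this
    have hcard := card_double_mul (Γ := Γ) 2
    rw [← hDdef] at hcard
    have hK : 4 ∣ Nat.card (nsmulAddMonoidHom (α := Γ) 2).ker := by
      refine (Nat.Coprime.dvd_of_dvd_mul_left ?_ (hcard ▸ h4))
      exact Nat.Coprime.pow_left 2 ((Nat.Prime.coprime_iff_not_dvd Nat.prime_two).2 hodd)
    have hKpos : 0 < Nat.card (nsmulAddMonoidHom (α := Γ) 2).ker := Nat.card_pos
    have hK4 := Nat.le_of_dvd hKpos hK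
    have hDpos : 0 < Nat.card D := Nat.card_pos
    -- `D` and its translate by `ι` have too few elements to exhaust the group
    have : ((D : Set Γ) ∪ (fun x => x - ι) '' (D : Set Γ)) ≠ Set.univ := by
      intro h
      have h1 := Set.ncard_union_le (D : Set Γ) ((fun x => x - ι) '' (D : Set Γ))
      rw [h, Set.ncard_univ] at h1
      have h2 := Set.ncard_image_le (f := fun x => x - ι) (Set.toFinite (D : Set Γ))
      have h3 : (D : Set Γ).ncard = Nat.card D := rfl
      nlinarith
    obtain ⟨ω, hω⟩ := (Set.ne_univ_iff_exists_notMem _).1 this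
    simp only [Set.mem_union, not_or] at hω
    refine ⟨ι, ω, hι0, hι2, fun x => ⟨fun h => hω.1 ⟨x, ?_⟩, fun h => hω.2 ⟨ω + ι, ⟨x, ?_⟩, ?_⟩⟩⟩
    · simpa [two_nsmul] using h
    · simpa [two_nsmul] using h
    · simp

lemma exists_mag_univ_two_two {Γ : Type*} [AddCommGroup Γ] [Finite Γ] (h4 : 4 ∣ Nat.card Γ) :
    ∃ n ω δ, Mag (Set.univ : Set Γ) n 2 2 ω δ := by
  obtain ⟨ι, ω, h0, h1, h2⟩ := exists_not_double h4
  have := Fintype.ofFinite Γ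
  obtain ⟨n, hn⟩ := exists_mag_two_two (ω := ω) h0 h1 Finset.univ (by simp) (by simp)
    (fun x _ => (h2 x).1) (fun x _ => (h2 x).2)
  exact ⟨n, _, _, by simpa using hn⟩

/-- Small rectangles are glued into larger ones along both sides. -/
lemma Mag.resize {Γ : Type*} [AddCommGroup Γ] {n a₀ b₀ a b c : ℕ} {ω δ : Γ}
    (h : Mag (Set.univ : Set Γ) n a₀ b₀ ω δ) (ha₀ : a₀ ∣ a) (hb₀ : b₀ ∣ b) (ha : 0 < a)
    (hb : 0 < b) (hcard : Nat.card Γ = a * b * c) :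
    ∃ ω δ, Mag (Set.univ : Set Γ) c a b ω δ := by
  obtain ⟨k, rfl⟩ := ha₀
  obtain ⟨l, rfl⟩ := hb₀
  have hn := h.ncard
  rw [Set.ncard_univ, hcard] at hn
  have : n = (c * l) * k := by
    have h0 : 0 < a₀ * b₀ :=
      Nat.mul_pos (Nat.pos_of_mul_pos_right ha) (Nat.pos_of_mul_pos_right hb)
    refine Nat.eq_of_mul_eq_mul_right h0 ?_
    rw [← hn]; ring
  subst this
  have hs := h.stack.transpose.stack.transpose
  rw [mul_comm k, mul_comm l] at hs
  exact ⟨_, _, hs⟩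

/-! ### Groups of odd order -/

lemma Mag.of_types {G : Type*} [AddCommGroup G] {S A B : Type*} [Fintype S] [Fintype A]
    [Fintype B] {X : Set G} {ω δ : G}
    (x : S × A × B → G) (hx : Function.Injective x) (hX : Set.range x = X)
    (hr : ∀ s i, ∑ j, x (s, i, j) = ω) (hc : ∀ s j, ∑ i, x (s, i, j) = δ) :
    Mag X (Fintype.card S) (Fintype.card A) (Fintype.card B) ω δ := by
  let e : S × Fin (Fintype.card A) × Fin (Fintype.card B) ≃ S × A × B :=
    (Equiv.refl S).prodCongr ((Fintype.equivFin A).symm.prodCongr (Fintype.equivFin B).symm)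
  refine Mag.of_fintype (x ∘ e) (hx.comp e.injective) ?_ ?_ ?_
  · rw [e.surjective.range_comp, hX]
  · intro s i
    rw [← hr s ((Fintype.equivFin A).symm i), ← (Fintype.equivFin B).symm.sum_comp]
    rfl
  · intro s j
    rw [← hc s ((Fintype.equivFin B).symm j), ← (Fintype.equivFin A).symm.sum_comp]
    rfl

lemma zmod_two_ne_zero {p : ℕ} (hp : p.Prime) (hp2 : Odd p) : (2 : ZMod p) ≠ 0 := by
  intro h
  have h' : ((2 : ℕ) : ZMod p) = 0 := by exact_mod_cast h
  rw [ZMod.natCast_eq_zero_iff, Nat.prime_dvd_prime_iff_eq hp Nat.prime_two] at h'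
  subst h'
  exact absurd hp2 (by decide)

lemma zmod_sum_eq_zero {p : ℕ} [Fact p.Prime] (hp : Odd p) : ∑ i : ZMod p, i = 0 := by
  have h : ∑ i : ZMod p, i = -∑ i : ZMod p, i := by
    rw [← Finset.sum_neg_distrib]
    exact (Equiv.sum_comp (Equiv.neg (ZMod p)) (fun i => i)).symm
  rw [eq_neg_iff_add_eq_zero, ← two_mul, mul_eq_zero] at h
  exact h.resolve_left (zmod_two_ne_zero Fact.out hp)

/-- The rectangle `(i, j) ↦ (μ j * i, ν i * j)` over `ℤ/p × ℤ/q`, where the nonzero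
coefficients `μ j` sum to zero, `ν 0 = 1 - p` and all other `ν i` are `1`. The condition `p < q`
ensures `1 - p ≠ 0` in `ℤ/q`. -/
lemma mag_zmod_prod {p q : ℕ} (hp : p.Prime) (hq : q.Prime) (hp2 : Odd p) (hpq : p < q) :
    ∃ ω δ, Mag (Set.univ : Set (ZMod p × ZMod q)) 1 p q ω δ := by
  have := Fact.mk hp
  have := Fact.mk hq
  have hq2 : Odd q := hq.odd_of_ne_two (by have := hp.two_le; omega)
  have hp3 : (2 : ZMod p) ≠ 0 := zmod_two_ne_zero hp hp2
  obtain ⟨μ, hμ, hμs⟩ : ∃ μ : ZMod q → ZMod p, (∀ j, μ j ≠ 0) ∧ ∑ j, μ j = 0 := by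
    obtain ⟨s, c, hsc⟩ := exists_balanced q hq.two_le
    have e : ZMod q ≃ Fin q := Fintype.equivOfCardEq (by simp [ZMod.card])
    let g : ZMod 3 → ZMod p := fun k => if k = 2 then -2 else 1
    have hg : ∑ k, g k = 0 := by
      rw [show ∑ k : ZMod 3, g k = g 0 + g 1 + g 2 from Fin.sum_univ_three (f := g)]
      have h0 : g 0 = 1 := if_neg (by decide)
      have h1 : g 1 = 1 := if_neg (by decide)
      have h2 : g 2 = -2 := if_pos rfl
      rw [h0, h1, h2]; norm_num
    have hg0 : ∀ k, g k ≠ 0 := by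
      intro k
      simp only [g]
      split_ifs
      · exact neg_ne_zero.2 hp3
      · exact one_ne_zero
    refine ⟨fun j => ((s (e j) : ℤˣ) : ℤ) • g (c (e j)), fun j => ?_, ?_⟩
    · rcases Int.units_eq_one_or (s (e j)) with h | h <;> simp [h, hg0]
    · rw [← hsc (ZMod p) g hg]
      exact e.sum_comp (fun i => ((s i : ℤˣ) : ℤ) • g (c i))
  let ν : ZMod p → ZMod q := fun i => if i = 0 then 1 - p else 1
  have hν : ∀ i, ν i ≠ 0 := by
    intro i
    simp only [ν]
    split_ifs
    · rw [sub_ne_zero]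
      intro h
      have h' : ((1 : ℕ) : ZMod q) = (p : ℕ) := by exact_mod_cast h
      rw [ZMod.natCast_eq_natCast_iff', Nat.mod_eq_of_lt hpq, Nat.mod_eq_of_lt hq.one_lt] at h'
      exact hp.one_lt.ne h'
    · exact one_ne_zero
  have hνs : ∑ i, ν i = 0 := by
    have : ∀ i, ν i = 1 + if i = 0 then -(p : ZMod q) else 0 := by
      intro i; simp only [ν]; split_ifs <;> ring
    simp [this, Finset.sum_add_distrib]
  have hinj : Function.Injective fun t : Unit × ZMod p × ZMod q =>
      (μ t.2.2 * t.2.1, ν t.2.1 * t.2.2) := by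
    rintro ⟨u, i, j⟩ ⟨u', i', j'⟩ e
    simp only [Prod.mk.injEq] at e
    obtain ⟨e1, e2⟩ := e
    have hi : i = 0 ↔ i' = 0 := by
      constructor
      · rintro rfl
        simpa [hμ] using e1.symm
      · rintro rfl
        simpa [hμ] using e1
    have hνi : ν i = ν i' := by simp only [ν, hi]
    rw [hνi] at e2
    obtain rfl := mul_left_cancel₀ (hν i') e2
    obtain rfl := mul_left_cancel₀ (hμ j) e1
    rfl
  have h := Mag.of_types (S := Unit) (X := (Set.univ : Set (ZMod p × ZMod q))) (ω := 0) (δ := 0)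
    (fun t => (μ t.2.2 * t.2.1, ν t.2.1 * t.2.2)) ?_ ?_ ?_ ?_
  · rw [ZMod.card, ZMod.card] at h
    exact ⟨0, 0, h⟩
  · exact hinj
  · rw [Set.range_eq_univ]
    exact ((Fintype.bijective_iff_injective_and_card _).2 ⟨hinj, by simp⟩).surjective
  · intro s i
    ext
    · simp [← Finset.sum_mul, hμs, Prod.fst_sum]
    · rw [Prod.snd_sum]
      exact (Finset.mul_sum Finset.univ (fun k : ZMod q => k) (ν i)).symm.trans
        (by rw [zmod_sum_eq_zero hq2, mul_zero]; rfl)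
  · intro s j
    ext
    · rw [Prod.fst_sum]
      exact (Finset.mul_sum Finset.univ (fun k : ZMod p => k) (μ j)).symm.trans
        (by rw [zmod_sum_eq_zero hp2, mul_zero]; rfl)
    · simp [← Finset.sum_mul, hνs, Prod.snd_sum]

/-- The rectangle `(i, j) ↦ (i + j) g + (i + 2 j) h` with `i, j` in `ℤ/p`, where `g` has order `p`
and `h` has order `p` modulo `g`. The coefficients are the least residues, as `h` itself may have
larger order: in every row and column each coefficient runs through all residues, so the sums are
constant without any relation on `h`. -/
lemma exists_mag_prime_sq {Γ : Type*} [AddCommGroup Γ] [Finite Γ] {p : ℕ} (hp : p.Prime)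
    (hp2 : Odd p) (hpp : p * p ∣ Nat.card Γ) :
    ∃ (H : AddSubgroup Γ) (ω δ : Γ), Mag (H : Set Γ) 1 p p ω δ := by
  have := Fact.mk hp
  obtain ⟨g, hg⟩ := exists_prime_addOrderOf_dvd_card' (G := Γ) p (dvd_trans ⟨p, rfl⟩ hpp)
  set H := AddSubgroup.zmultiples g with hH
  have hcH : Nat.card H = p := by rw [hH, Nat.card_zmultiples, hg]
  have hquot : p ∣ Nat.card (Γ ⧸ H) := by
    rw [AddSubgroup.card_eq_card_quotient_mul_card_addSubgroup H, hcH] at hpp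
    exact Nat.dvd_of_mul_dvd_mul_right hp.pos hpp
  obtain ⟨q, hq⟩ := exists_prime_addOrderOf_dvd_card' (G := Γ ⧸ H) p hquot
  obtain ⟨h, rfl⟩ := QuotientAddGroup.mk_surjective q
  have hgH : ∀ m : ℕ, m • g ∈ H := fun m => H.nsmul_mem (AddSubgroup.mem_zmultiples g) m
  have keyg : ∀ z : ℤ, ∃ u : ZMod p, u.val • g = z • g := fun z => ⟨z, by
    rw [← natCast_zsmul, ZMod.val_intCast, ← hg, mod_addOrderOf_zsmul]⟩
  have keyh : ∀ z : ℤ, ∃ u : ZMod p, z • h - u.val • h ∈ H := fun z => ⟨z, by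
    rw [← QuotientAddGroup.eq_zero_iff, QuotientAddGroup.mk_sub, QuotientAddGroup.mk_zsmul,
      QuotientAddGroup.mk_nsmul, ← natCast_zsmul, ZMod.val_intCast, ← hq, mod_addOrderOf_zsmul,
      sub_self]⟩
  have injg : ∀ u v : ZMod p, u.val • g = v.val • g → u = v := fun u v e => by
    rw [nsmul_eq_nsmul_iff_modEq, hg] at e
    exact ZMod.val_injective p (Nat.ModEq.eq_of_lt_of_lt e u.val_lt v.val_lt)
  have injh : ∀ u v : ZMod p, u.val • h - v.val • h ∈ H → u = v := fun u v e => by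
    rw [← QuotientAddGroup.eq_zero_iff, QuotientAddGroup.mk_sub, sub_eq_zero,
      QuotientAddGroup.mk_nsmul, QuotientAddGroup.mk_nsmul, nsmul_eq_nsmul_iff_modEq, hq] at e
    exact ZMod.val_injective p (Nat.ModEq.eq_of_lt_of_lt e u.val_lt v.val_lt)
  have h2 : (2 : ZMod p) ≠ 0 := zmod_two_ne_zero hp hp2
  have hsum : ∀ (x : Γ) (c d : ZMod p), c ≠ 0 →
      ∑ j : ZMod p, (d + c * j).val • x = ∑ j : ZMod p, j.val • x := fun x c d hc =>
    Equiv.sum_comp ((Equiv.mulLeft₀ c hc).trans (Equiv.addLeft d)) (fun j : ZMod p => j.val • x)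
  have := Mag.of_types (S := Unit)
    (X := (((AddSubgroup.zmultiples (QuotientAddGroup.mk h : Γ ⧸ H)).comap
      (QuotientAddGroup.mk' H) : AddSubgroup Γ) : Set Γ))
    (ω := ∑ j : ZMod p, j.val • g + ∑ j : ZMod p, j.val • h)
    (δ := ∑ j : ZMod p, j.val • g + ∑ j : ZMod p, j.val • h)
    (fun t : Unit × ZMod p × ZMod p =>
      (t.2.1 + t.2.2).val • g + (t.2.1 + 2 * t.2.2).val • h) ?_ ?_ ?_ ?_
  · rw [ZMod.card] at this
    exact ⟨_, _, _, this⟩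
  · rintro ⟨u, i, j⟩ ⟨u', i', j'⟩ e
    simp only at e
    have e1 : i + 2 * j = i' + 2 * j' := by
      apply injh
      rw [show ∀ x y z w : Γ, x - y = (z + x) - (w + y) - z + w by intros; abel, e, sub_self,
        zero_sub]
      exact H.add_mem (H.neg_mem (hgH _)) (hgH _)
    rw [e1, add_left_inj] at e
    have e2 := injg _ _ e
    have e3 : j = j' := by linear_combination e1 - e2
    subst e3
    have e4 : i = i' := by linear_combination e2
    rw [e4]
  · ext y
    simp only [AddSubgroup.coe_comap, Set.mem_preimage, SetLike.mem_coe,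
      AddSubgroup.mem_zmultiples_iff, QuotientAddGroup.mk'_apply, ← QuotientAddGroup.mk_zsmul]
    constructor
    · rintro ⟨⟨-, i, j⟩, rfl⟩
      refine ⟨(i + 2 * j).val, ?_⟩
      rw [QuotientAddGroup.mk_add, (QuotientAddGroup.eq_zero_iff _).2 (hgH _), zero_add,
        natCast_zsmul]
    · rintro ⟨z, hz⟩
      obtain ⟨v, hv⟩ := keyh z
      have hy : y - v.val • h ∈ H := by
        have h1 : y - z • h ∈ H := by
          rw [← QuotientAddGroup.eq_zero_iff, QuotientAddGroup.mk_sub, hz, sub_self]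
        have := H.add_mem h1 hv
        rwa [sub_add_sub_cancel] at this
      obtain ⟨w, hw⟩ := AddSubgroup.mem_zmultiples_iff.1 hy
      obtain ⟨u, hu⟩ := keyg w
      refine ⟨((), 2 * u - v, v - u), ?_⟩
      simp only
      rw [show 2 * u - v + (v - u) = u by ring, show 2 * u - v + 2 * (v - u) = v by ring, hu, hw,
        sub_add_cancel]
  · intro s i
    simp only [Finset.sum_add_distrib]
    rw [hsum h 2 i h2, ← hsum g 1 i one_ne_zero]
    simp
  · intro s j
    simp only [Finset.sum_add_distrib]
    rw [← hsum g 1 j one_ne_zero, ← hsum h 1 (2 * j) one_ne_zero]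
    simp [add_comm]

/-- An element of order `m` embeds `ℤ/m`. -/
lemma exists_zmod_hom {Γ : Type*} [AddCommGroup Γ] {m : ℕ} (g : Γ) (hg : addOrderOf g = m) :
    ∃ f : ZMod m →+ Γ, Function.Injective f := by
  subst hg
  refine ⟨ZMod.lift _ ⟨zmultiplesHom Γ g, by simp⟩, ?_⟩
  rw [ZMod.lift_injective]
  intro m hm
  rw [ZMod.intCast_zmod_eq_zero_iff_dvd]
  exact addOrderOf_dvd_iff_zsmul_eq_zero.2 (by simpa using hm)

lemma exists_mag_primes {Γ : Type*} [AddCommGroup Γ] [Finite Γ] {p q : ℕ} (hp : p.Prime)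
    (hq : q.Prime) (hp2 : Odd p) (hpq : p < q) (hd : p * q ∣ Nat.card Γ) :
    ∃ (H : AddSubgroup Γ) (ω δ : Γ), Mag (H : Set Γ) 1 p q ω δ := by
  have := Fact.mk hp
  have := Fact.mk hq
  obtain ⟨g, hg⟩ := exists_prime_addOrderOf_dvd_card' (G := Γ) p (dvd_trans ⟨q, rfl⟩ hd)
  obtain ⟨h, hh⟩ := exists_prime_addOrderOf_dvd_card' (G := Γ) q (dvd_trans ⟨p, mul_comm _ _⟩ hd)
  have hco : p.Coprime q := (Nat.coprime_primes hp hq).2 hpq.ne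
  have hgh : addOrderOf (g + h) = p * q := by
    rw [(AddCommute.all g h).addOrderOf_add_eq_mul_addOrderOf_of_coprime (by rwa [hg, hh]), hg, hh]
  obtain ⟨f, hf⟩ := exists_zmod_hom (g + h) hgh
  obtain ⟨ω, δ, hM⟩ := mag_zmod_prod hp hq hp2 hpq
  let e := (ZMod.chineseRemainder hco).symm
  let F : ZMod p × ZMod q →+ Γ := f.comp (e : ZMod p × ZMod q →+ ZMod (p * q))
  have := hM.map F ((hf.comp e.injective).injOn)
  exact ⟨F.range, _, _, by rwa [AddMonoidHom.coe_range, ← Set.image_univ]⟩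

/-- The sufficiency part for groups of odd order. -/
lemma exists_mag_odd {Γ : Type*} [AddCommGroup Γ] [Finite Γ] {a b c : ℕ} (ha : 1 < a) (hb : 1 < b)
    (hcard : Nat.card Γ = a * b * c) (ha2 : Odd a) (hb2 : Odd b) (hodd : Odd (Nat.card Γ)) :
    ∃ ω δ, Mag (Set.univ : Set Γ) c a b ω δ := by
  obtain ⟨p, hp, hpa⟩ := Nat.exists_prime_and_dvd ha.ne'
  obtain ⟨q, hq, hqb⟩ := Nat.exists_prime_and_dvd hb.ne'
  have hp2 := ha2.of_dvd_nat hpa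
  have hq2 := hb2.of_dvd_nat hqb
  have hd : p * q ∣ Nat.card Γ := by
    rw [hcard]; exact Dvd.dvd.mul_right (mul_dvd_mul hpa hqb) c
  obtain ⟨H, ω, δ, h⟩ : ∃ (H : AddSubgroup Γ) (ω δ : Γ), Mag (H : Set Γ) 1 p q ω δ := by
    rcases lt_trichotomy p q with h | rfl | h
    · exact exists_mag_primes hp hq hp2 h hd
    · exact exists_mag_prime_sq hp hp2 hd
    · obtain ⟨H, ω, δ, h⟩ := exists_mag_primes hq hp hq2 h (by rwa [mul_comm])
      exact ⟨H, _, _, h.transpose⟩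
  have hi : Odd H.index := hodd.of_dvd_nat H.index_dvd_card
  obtain ⟨n, hn⟩ := h.extend_odd hp.two_le hq.two_le hi
  exact hn.resize hpa hqb (by omega) (by omega) hcard

/-! ### Rectangles with four columns over a product `P × R` -/

/-- The set `P × S` is partitioned into rectangles of size `a × 4` whose rows sum to zero.
The set `S` is the whole cyclic group of order `a`, or an interval of integers representing it. -/
def HasRect (P : Type*) [AddCommGroup P] (R : Type*) [AddCommGroup R] (S : Set R) (a : ℕ) : Prop :=
  ∃ n δ, Mag (Set.univ ×ˢ S : Set (P × R)) n a 4 0 δ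

lemma sum_zmod_three {M : Type*} [AddCommMonoid M] (f : ZMod 3 → M) :
    ∑ k, f k = f 0 + f 1 + f 2 := Fin.sum_univ_three (f := f)

lemma ncard_Icc_int (k l : ℤ) : (Set.Icc k l).ncard = (l + 1 - k).toNat := by
  rw [← Finset.coe_Icc, Set.ncard_coe_finset, Int.card_Icc]

lemma HasRect.of_table {P R : Type*} [AddCommGroup P] [Finite P] [AddCommGroup R] {S : Set R}
    [Finite S] {a m : ℕ} (x : Fin m → Fin a → Fin 4 → P × R)
    (hx : Function.Injective fun t : Fin m × Fin a × Fin 4 => x t.1 t.2.1 t.2.2)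
    (hS : ∀ s i j, (x s i j).2 ∈ S)
    (hcard : (Set.univ ×ˢ S : Set (P × R)).ncard ≤ m * (a * 4))
    (hr : ∀ s i, ∑ j, x s i j = 0) (hc : ∀ s j, ∑ i, x s i j = 0) : HasRect P R S a :=
  ⟨_, _, Mag.of_card (S := Fin m) (fun t => x t.1 t.2.1 t.2.2) hx
    (fun t => ⟨trivial, hS _ _ _⟩) (Set.toFinite _) (by simpa using hcard) hr hc⟩

lemma HasRect.congr {P P' R : Type*} [AddCommGroup P] [AddCommGroup P'] [AddCommGroup R]
    {S : Set R} {a : ℕ} (h : HasRect P R S a) (e : P ≃+ P') : HasRect P' R S a := by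
  obtain ⟨n, δ, h⟩ := h
  have := h.map (AddMonoidHom.prodMap (e : P →+ P') (AddMonoidHom.id R))
    (Function.Injective.injOn (Function.Injective.prodMap e.injective Function.injective_id))
  rw [map_zero] at this
  refine ⟨n, _, (congrArg (fun X => Mag X n a 4 0 _) ?_).mp this⟩
  ext ⟨y, s⟩
  symm
  constructor
  · intro hs
    exact ⟨(e.symm y, s), ⟨trivial, hs.2⟩, by simp⟩
  · rintro ⟨⟨x, s'⟩, hs, h⟩
    simp only [AddMonoidHom.prodMap_def, Prod.mk.injEq] at h
    simp at h
    exact ⟨trivial, h.2 ▸ hs.2⟩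

lemma HasRect.map_right {P R R' : Type*} [AddCommGroup P] [AddCommGroup R] [AddCommGroup R']
    {S : Set R} {a : ℕ} (h : HasRect P R S a) (f : R →+ R') (hf : Set.InjOn f S) :
    HasRect P R' (f '' S) a := by
  obtain ⟨n, δ, h⟩ := h
  have := h.map (AddMonoidHom.prodMap (AddMonoidHom.id P) f) (by
    rintro ⟨y, s⟩ hs ⟨y', s'⟩ hs' h
    simp at h
    exact Prod.ext h.1 (hf hs.2 hs'.2 h.2))
  rw [map_zero] at this
  refine ⟨n, _, (congrArg (fun X => Mag X n a 4 0 _) ?_).mp this⟩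
  ext ⟨y, s⟩
  simp [eq_comm]

lemma HasTriple.congr {G H : Type*} [AddCommGroup G] [AddCommGroup H] (h : HasTriple G)
    (e : G ≃+ H) : HasTriple H := by
  obtain ⟨π, hπ⟩ := h
  refine ⟨fun k => (e.symm.toEquiv.trans (π k)).trans e.toEquiv, fun q => ?_⟩
  simpa using congrArg e (hπ (e.symm q))

section Bases

/-- A complete mapping of `G` yields a zero-sum triple of permutations. -/
lemma HasTriple.of_injective {G : Type*} [AddCommGroup G] [Finite G] (f : G → G)
    (hf : Function.Injective f) (hf' : Function.Injective fun x => x + f x) : HasTriple G := by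
  refine ⟨![Equiv.refl G, Equiv.ofBijective f (Finite.injective_iff_bijective.1 hf),
    (Equiv.ofBijective _ (Finite.injective_iff_bijective.1 hf')).trans (Equiv.neg G)], fun q => ?_⟩
  refine (sum_zmod_three _).trans ?_
  change q + f q + -(q + f q) = 0
  exact add_neg_cancel _

lemma hasTriple_22 : HasTriple (ZMod 2 × ZMod 2) :=
  .of_injective (fun x => (x.2, x.1 + x.2)) (by decide) (by decide)

/-- The complete mapping is multiplication by a generator of the field with eight elements. -/
lemma hasTriple_222 : HasTriple (ZMod 2 × ZMod 2 × ZMod 2) :=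
  .of_injective (fun x => (x.2.2, x.1 + x.2.2, x.2.1)) (by decide) (by decide)

/-- The complete mapping is given by a matrix satisfying `A ^ 2 + A + 1 = 0`. -/
lemma hasTriple_44 : HasTriple (ZMod 4 × ZMod 4) :=
  .of_injective (fun x => (-x.2, x.1 - x.2)) (by decide) (by decide)

lemma hasTriple_42 : HasTriple (ZMod 4 × ZMod 2) :=
  .of_injective (fun x => (![![(0, 0), (1, 0)], ![(1, 1), (2, 0)], ![(2, 1), (3, 1)], ![(3, 0), (0, 1)]] :
      Fin 4 → Fin 2 → ZMod 4 × ZMod 2) x.1 x.2)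
    (by decide) (by decide)

lemma hasTriple_422 : HasTriple (ZMod 4 × ZMod 2 × ZMod 2) :=
  .of_injective (fun x => (![![![(0, 0, 0), (0, 1, 0)], ![(0, 1, 1), (0, 0, 1)]],
      ![![(1, 0, 0), (1, 1, 0)], ![(2, 0, 0), (2, 1, 0)]],
      ![![(1, 1, 1), (1, 0, 1)], ![(3, 0, 0), (3, 1, 0)]],
      ![![(2, 1, 1), (2, 0, 1)], ![(3, 1, 1), (3, 0, 1)]]] :
      Fin 4 → Fin 2 → Fin 2 → ZMod 4 × ZMod 2 × ZMod 2) x.1 x.2.1 x.2.2)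
    (by decide +kernel) (by decide +kernel)

lemma hasRect_22_three : HasRect (ZMod 2 × ZMod 2) (ZMod 3) Set.univ 3 := by
  refine HasRect.of_table (m := 1) (![![![((0, 0), 0), ((0, 1), 0), ((1, 0), 1), ((1, 1), 2)],
      ![((0, 1), 1), ((1, 1), 1), ((1, 0), 0), ((0, 0), 1)],
      ![((0, 1), 2), ((1, 0), 2), ((0, 0), 2), ((1, 1), 0)]]])
    (by decide +kernel) (by decide +kernel) ?_ (by decide +kernel) (by decide +kernel)
  simp [Set.ncard_univ]

lemma hasRect_222_three : HasRect (ZMod 2 × ZMod 2 × ZMod 2) (ZMod 3) Set.univ 3 := by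
  refine HasRect.of_table (m := 2) (![![![((0, 0, 0), 0), ((1, 1, 0), 2), ((1, 0, 1), 0), ((0, 1, 1), 1)],
      ![((1, 0, 1), 1), ((0, 0, 1), 0), ((0, 1, 1), 2), ((1, 1, 1), 0)],
      ![((1, 0, 1), 2), ((1, 1, 1), 1), ((1, 1, 0), 1), ((1, 0, 0), 2)]],
    ![![((0, 1, 0), 0), ((0, 1, 1), 0), ((0, 0, 0), 2), ((0, 0, 1), 1)],
      ![((0, 0, 0), 1), ((0, 1, 0), 1), ((1, 0, 0), 1), ((1, 1, 0), 0)],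
      ![((0, 1, 0), 2), ((0, 0, 1), 2), ((1, 0, 0), 0), ((1, 1, 1), 2)]]])
    (by decide +kernel) (by decide +kernel) ?_ (by decide +kernel) (by decide +kernel)
  simp [Set.ncard_univ]

lemma hasRect_42 : HasRect (ZMod 4 × ZMod 2) ℤ (Set.Icc (-1) 1) 3 := by
  refine HasRect.of_table (m := 2) (![![![((0, 0), 0), ((1, 0), 1), ((2, 1), 0), ((1, 1), -1)],
      ![((2, 1), 1), ((0, 1), 0), ((3, 0), -1), ((3, 0), 0)],
      ![((2, 1), -1), ((3, 1), -1), ((3, 1), 1), ((0, 1), 1)]],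
    ![![((1, 0), 0), ((0, 1), -1), ((2, 0), 0), ((1, 1), 1)],
      ![((2, 0), 1), ((1, 1), 0), ((2, 0), -1), ((3, 1), 0)],
      ![((1, 0), -1), ((3, 0), 1), ((0, 0), 1), ((0, 0), -1)]]])
    (by decide +kernel) (by decide +kernel) ?_ (by decide +kernel) (by decide +kernel)
  simp [Set.ncard_prod, Set.ncard_univ, ncard_Icc_int]

lemma hasRect_44 : HasRect (ZMod 4 × ZMod 4) ℤ (Set.Icc (-1) 1) 3 := by
  refine HasRect.of_table (m := 4) (![![![((0, 0), 0), ((1, 1), -1), ((2, 1), 1), ((1, 2), 0)],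
      ![((0, 0), 1), ((3, 1), 1), ((2, 0), -1), ((3, 3), -1)],
      ![((0, 0), -1), ((0, 2), 0), ((0, 3), 0), ((0, 3), 1)]],
    ![![((0, 1), 0), ((1, 0), -1), ((2, 0), 0), ((1, 3), 1)],
      ![((2, 0), 1), ((2, 3), 1), ((3, 2), -1), ((1, 3), -1)],
      ![((2, 3), -1), ((1, 1), 0), ((3, 2), 1), ((2, 2), 0)]],
    ![![((1, 0), 0), ((3, 0), -1), ((1, 1), 1), ((3, 3), 0)],
      ![((2, 2), 1), ((0, 1), 1), ((0, 3), -1), ((2, 2), -1)],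
      ![((1, 2), -1), ((1, 3), 0), ((3, 0), 0), ((3, 3), 1)]],
    ![![((2, 1), 0), ((3, 0), 1), ((3, 1), 0), ((0, 2), -1)],
      ![((0, 2), 1), ((3, 1), -1), ((0, 1), -1), ((1, 0), 1)],
      ![((2, 1), -1), ((2, 3), 0), ((1, 2), 1), ((3, 2), 0)]]])
    (by decide +kernel) (by decide +kernel) ?_ (by decide +kernel) (by decide +kernel)
  simp [Set.ncard_prod, Set.ncard_univ, ncard_Icc_int]

lemma hasRect_422 : HasRect (ZMod 4 × ZMod 2 × ZMod 2) ℤ (Set.Icc (-1) 1) 3 := by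
  refine HasRect.of_table (m := 4) (![![![((0, 0, 0), 0), ((0, 0, 0), 1), ((1, 1, 0), -1), ((3, 1, 0), 0)],
      ![((3, 0, 0), 1), ((2, 1, 0), 0), ((2, 1, 1), 0), ((1, 0, 1), -1)],
      ![((1, 0, 0), -1), ((2, 1, 0), -1), ((1, 0, 1), 1), ((0, 1, 1), 1)]],
    ![![((0, 0, 1), 0), ((0, 1, 1), 0), ((2, 1, 1), -1), ((2, 0, 1), 1)],
      ![((3, 1, 0), 1), ((3, 0, 1), -1), ((3, 1, 1), 1), ((3, 0, 0), -1)],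
      ![((1, 1, 1), -1), ((1, 1, 0), 1), ((3, 0, 0), 0), ((3, 0, 1), 0)]],
    ![![((0, 1, 0), 0), ((1, 0, 1), 0), ((1, 1, 0), 0), ((2, 0, 1), 0)],
      ![((2, 1, 1), 1), ((3, 0, 1), 1), ((3, 1, 1), -1), ((0, 0, 1), -1)],
      ![((2, 0, 1), -1), ((0, 0, 0), -1), ((0, 0, 1), 1), ((2, 0, 0), 1)]],
    ![![((1, 0, 0), 0), ((1, 1, 1), 1), ((2, 0, 0), 0), ((0, 1, 1), -1)],
      ![((0, 1, 0), 1), ((1, 1, 1), 0), ((0, 1, 0), -1), ((3, 1, 1), 0)],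
      ![((3, 1, 0), -1), ((2, 0, 0), -1), ((2, 1, 0), 1), ((1, 0, 0), 1)]]])
    (by decide +kernel) (by decide +kernel) ?_ (by decide +kernel) (by decide +kernel)
  simp [Set.ncard_prod, Set.ncard_univ, ncard_Icc_int]

lemma hasRect_22_five : HasRect (ZMod 2 × ZMod 2) ℤ (Set.Icc (-2) 2) 5 := by
  refine HasRect.of_table (m := 1) (![![![((0, 0), 2), ((1, 0), -2), ((0, 1), 2), ((1, 1), -2)],
      ![((0, 1), -1), ((0, 1), 1), ((1, 1), 1), ((1, 1), -1)],
      ![((1, 0), 0), ((1, 1), 2), ((0, 1), -2), ((0, 0), 0)],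
      ![((1, 0), -1), ((0, 0), 1), ((0, 0), -1), ((1, 0), 1)],
      ![((0, 1), 0), ((0, 0), -2), ((1, 1), 0), ((1, 0), 2)]]])
    (by decide +kernel) (by decide +kernel) ?_ (by decide +kernel) (by decide +kernel)
  simp [Set.ncard_prod, Set.ncard_univ, ncard_Icc_int]

lemma hasRect_222_five : HasRect (ZMod 2 × ZMod 2 × ZMod 2) ℤ (Set.Icc (-2) 2) 5 := by
  refine HasRect.of_table (m := 2) (![![![((0, 0, 1), -2), ((0, 1, 0), -2), ((1, 0, 0), 2), ((1, 1, 1), 2)],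
      ![((1, 1, 1), -1), ((1, 0, 0), 1), ((0, 0, 0), 2), ((0, 1, 1), -2)],
      ![((0, 0, 1), 1), ((0, 0, 0), 1), ((1, 1, 1), -2), ((1, 1, 0), 0)],
      ![((1, 0, 1), 2), ((0, 0, 0), -2), ((0, 1, 1), -1), ((1, 1, 0), 1)],
      ![((0, 1, 0), 0), ((1, 1, 0), 2), ((0, 0, 0), -1), ((1, 0, 0), -1)]],
    ![![((1, 0, 1), -1), ((0, 0, 1), -1), ((1, 1, 1), 0), ((0, 1, 1), 2)],
      ![((0, 0, 0), 0), ((1, 1, 0), -1), ((1, 1, 1), 1), ((0, 0, 1), 0)],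
      ![((1, 0, 0), -2), ((0, 1, 1), 0), ((0, 1, 0), 1), ((1, 0, 1), 1)],
      ![((0, 1, 0), 2), ((0, 0, 1), 2), ((1, 1, 0), -2), ((1, 0, 1), -2)],
      ![((0, 1, 1), 1), ((1, 0, 1), 0), ((1, 0, 0), 0), ((0, 1, 0), -1)]]])
    (by decide +kernel) (by decide +kernel) ?_ (by decide +kernel) (by decide +kernel)
  simp [Set.ncard_prod, Set.ncard_univ, ncard_Icc_int]

end Bases

/-! ### Lifting from a subgroup with Klein quotient -/

/-- Transversal of a Klein quotient with zero sum. -/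
lemma exists_transversal {P : Type*} [AddCommGroup P] {K : AddSubgroup P} (hK : K.index = 4)
    (h2 : ∀ x, x + x ∈ K) : ∃ T : Fin 4 → P, T 0 = 0 ∧ T 1 + T 2 + T 3 = 0 ∧
      (∀ q q', T q - T q' ∈ K → q = q') ∧ ∀ y, ∃ q, y - T q ∈ K := by
  have hcard : Nat.card (P ⧸ K) = 4 := hK
  have : Finite (P ⧸ K) := Nat.finite_of_card_ne_zero (by omega)
  have := Fintype.ofFinite (P ⧸ K)
  have hex : ∀ s : Finset (P ⧸ K), s.card < 4 → ∃ u : P, (u : P ⧸ K) ∉ s := by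
    classical
    intro s hs
    obtain ⟨q, -, hq⟩ := Finset.exists_mem_notMem_of_card_lt_card (s := s)
      (t := Finset.univ) (by rw [Finset.card_univ, ← Nat.card_eq_fintype_card, hcard]; exact hs)
    obtain ⟨u, rfl⟩ := QuotientAddGroup.mk_surjective q
    exact ⟨u, hq⟩
  classical
  obtain ⟨u, hu⟩ := hex {0} (by simp)
  obtain ⟨v, hv⟩ := hex {0, (u : P ⧸ K)} (lt_of_le_of_lt Finset.card_le_two (by norm_num))
  simp only [Finset.mem_singleton, Finset.mem_insert, not_or] at hu hv
  have hd : ∀ x : P ⧸ K, x + x = 0 := by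
    intro x
    obtain ⟨x, rfl⟩ := QuotientAddGroup.mk_surjective x
    rw [← QuotientAddGroup.mk_add, QuotientAddGroup.eq_zero_iff]
    exact h2 x
  let T : Fin 4 → P := ![0, u, v, -(u + v)]
  have hinj : Function.Injective fun q => (T q : P ⧸ K) := by
    have huv : (u : P ⧸ K) + v ≠ 0 := fun h => hv.2 (by
      rw [← add_left_cancel_iff (a := (u : P ⧸ K)), h, hd])
    have e1 : (u : P ⧸ K) ≠ -(u + v) := fun h => hv.1 (by
      have : (u : P ⧸ K) + u + v = 0 := by nth_rewrite 1 [h]; abel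
      rwa [hd, zero_add] at this)
    have e2 : (v : P ⧸ K) ≠ -(u + v) := fun h => hu (by
      have : (v : P ⧸ K) + v + u = 0 := by nth_rewrite 1 [h]; abel
      rwa [hd, zero_add] at this)
    have e3 : -((u : P ⧸ K) + v) ≠ 0 := neg_ne_zero.2 huv
    have hT : (fun q => (T q : P ⧸ K)) = ![0, (u : P ⧸ K), v, -(u + v)] := by
      ext q; fin_cases q <;> rfl
    rw [hT]
    intro q q' h
    fin_cases q <;> fin_cases q' <;>
      first
        | rfl
        | exact absurd h hu
        | exact absurd h.symm hu
        | exact absurd h hv.1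
        | exact absurd h.symm hv.1
        | exact absurd h hv.2
        | exact absurd h.symm hv.2
        | exact absurd h e1
        | exact absurd h.symm e1
        | exact absurd h e2
        | exact absurd h.symm e2
        | exact absurd h e3
        | exact absurd h.symm e3
  have hsurj : Function.Surjective fun q => (T q : P ⧸ K) :=
    ((Fintype.bijective_iff_injective_and_card _).2
      ⟨hinj, by rw [← Nat.card_eq_fintype_card (α := P ⧸ K), hcard]; rfl⟩).surjective
  refine ⟨T, rfl, ?_, fun q q' h => hinj ?_, fun y => ?_⟩
  · change u + v + -(u + v) = 0
    exact add_neg_cancel _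
  · rwa [← QuotientAddGroup.eq_zero_iff, QuotientAddGroup.mk_sub, sub_eq_zero] at h
  · obtain ⟨q, hq⟩ := hsurj y
    refine ⟨q, ?_⟩
    rw [← QuotientAddGroup.eq_zero_iff, QuotientAddGroup.mk_sub, sub_eq_zero]
    exact hq.symm

/-- The powers of a three-cycle fixing `0`. -/
def kleinPerm : ZMod 3 → Equiv.Perm (Fin 4) :=
  ![1, Equiv.swap 1 2 * Equiv.swap 2 3, Equiv.swap 2 3 * Equiv.swap 1 2]

lemma sum_kleinPerm {M : Type*} [AddCommGroup M] {T : Fin 4 → M} (h0 : T 0 = 0)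
    (h : T 1 + T 2 + T 3 = 0) (q : Fin 4) : ∑ c, T (kleinPerm c q) = 0 := by
  rw [sum_zmod_three]
  have key : ∀ q : Fin 4, q ≠ 0 →
      (kleinPerm 0 q, kleinPerm 1 q, kleinPerm 2 q) ∈
        ([(1, 2, 3), (2, 3, 1), (3, 1, 2)] : List (Fin 4 × Fin 4 × Fin 4)) := by decide
  have key0 : ∀ c, kleinPerm c 0 = 0 := by decide
  by_cases hq : q = 0
  · subst hq; simp [key0, h0]
  · have := key q hq
    simp only [List.mem_cons, Prod.mk.injEq, List.not_mem_nil, or_false] at this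
    obtain ⟨h1, h2, h3⟩ | ⟨h1, h2, h3⟩ | ⟨h1, h2, h3⟩ := this <;> rw [h1, h2, h3, ← h] <;> abel

section Klein

variable {P R : Type*} [AddCommGroup P] [AddCommGroup R] {K : AddSubgroup P} {S : Set R}

lemma klein_set {T : Fin 4 → P} (hT : ∀ y, ∃ q, y - T q ∈ K) :
    {y | ∃ x ∈ {z : P × R | z.1 ∈ K ∧ z.2 ∈ S}, ∃ q, x + (T q, (0 : R)) = y} =
      Set.univ ×ˢ S := by
  ext ⟨y, s⟩
  constructor
  · rintro ⟨⟨x, s'⟩, ⟨-, hs⟩, q, h⟩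
    simp only [Prod.mk_add_mk, Prod.mk.injEq, add_zero] at h
    exact ⟨trivial, h.2 ▸ hs⟩
  · rintro ⟨-, hs⟩
    obtain ⟨q, hq⟩ := hT y
    exact ⟨(y - T q, s), ⟨hq, hs⟩, q, by simp⟩

lemma klein_inj {T : Fin 4 → P} (hT : ∀ q q', T q - T q' ∈ K → q = q') :
    ∀ x ∈ {z : P × R | z.1 ∈ K ∧ z.2 ∈ S}, ∀ x' ∈ {z : P × R | z.1 ∈ K ∧ z.2 ∈ S},
      ∀ q q', x + (T q, (0 : R)) = x' + (T q', (0 : R)) → q = q' := by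
  rintro ⟨x, s⟩ hx ⟨x', s'⟩ hx' q q' h
  simp only [Prod.mk_add_mk, Prod.mk.injEq, add_zero] at h
  apply hT
  rw [show T q - T q' = x' - x by rw [sub_eq_sub_iff_add_eq_add, add_comm, h.1]]
  exact K.sub_mem hx'.1 hx.1

lemma HasRect.push {a : ℕ} (h : HasRect K R S a) :
    ∃ n δ, Mag {z : P × R | z.1 ∈ K ∧ z.2 ∈ S} n a 4 0 δ := by
  obtain ⟨n, δ, h⟩ := h
  have := h.map (AddMonoidHom.prodMap K.subtype (AddMonoidHom.id R))
    (Function.Injective.injOn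
      (Function.Injective.prodMap K.subtype_injective Function.injective_id))
  rw [map_zero] at this
  refine ⟨n, _, (congrArg (fun X => Mag X n a 4 0 _) ?_).mp this⟩
  ext ⟨y, s⟩
  constructor
  · rintro ⟨⟨x, s'⟩, hs, h⟩
    simp at h
    exact ⟨h.1 ▸ x.2, h.2 ▸ hs.2⟩
  · rintro ⟨hy, hs⟩
    exact ⟨(⟨y, hy⟩, s), ⟨trivial, hs⟩, rfl⟩

/-- For three rows, the increments in position `(i, j)` run through the transversal along each row
and form a zero-sum triple in each column. -/
lemma HasRect.klein_three (hK : K.index = 4) (h2 : ∀ x, x + x ∈ K) (h : HasRect K R S 3) :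
    HasRect P R S 3 := by
  obtain ⟨T, h0, hs, hinj, hsurj⟩ := exists_transversal hK h2
  obtain ⟨n, δ, h⟩ := h.push
  have hT4 : ∑ q, T q = 0 := by rw [Fin.sum_univ_four, h0, zero_add, hs]
  have := h.lift (fun q => (T q, (0 : R))) (klein_inj hinj)
    (fun i j => (Equiv.addLeft j).trans (kleinPerm (i : ZMod 3))) ?_ ?_
  · rw [klein_set hsurj] at this
    exact ⟨_, _, this⟩
  · intro i q
    have := Equiv.sum_comp ((Equiv.addRight q).trans (kleinPerm (i : ZMod 3))) T
    ext
    · rw [Prod.fst_sum]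
      exact this.trans hT4
    · simp [Prod.snd_sum]
  · intro j q
    have := sum_kleinPerm h0 hs (j + q)
    ext
    · rw [Prod.fst_sum]
      exact this
    · simp [Prod.snd_sum]

/-- If every element is its own negative, the transversal is trivially symmetric, so that any number
of rows is possible. -/
lemma HasRect.klein_elementary (hK : K.index = 4) (h2 : ∀ x : P, x + x = 0) {a : ℕ} (ha : 2 ≤ a)
    (h : HasRect K R S a) : HasRect P R S a := by
  obtain ⟨T, h0, hs, hinj, hsurj⟩ := exists_transversal hK (fun x => by rw [h2]; exact zero_mem K)
  obtain ⟨n, δ, h⟩ := h.push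
  have := h.lift_symm ha (by norm_num) (fun q => (T q, (0 : R))) (klein_inj hinj)
    (Equiv.refl _) ?_ kleinPerm ?_
  · rw [klein_set hsurj] at this
    exact ⟨_, _, this⟩
  · intro q
    ext
    · exact (neg_eq_of_add_eq_zero_left (h2 (T q))).symm
    · simp
  · intro q
    have := sum_kleinPerm h0 hs q
    ext
    · rw [Prod.fst_sum]
      exact this
    · simp [Prod.snd_sum]

lemma HasTriple.klein (hK : K.index = 4) (h2 : ∀ x, x + x ∈ K) (h : HasTriple K) :
    HasTriple P := by
  obtain ⟨T, h0, hs, hinj, hsurj⟩ := exists_transversal hK h2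
  obtain ⟨τ, hτ⟩ := h
  let ψ : K × Fin 4 ≃ P := Equiv.ofBijective (fun t => t.1 + T t.2) ⟨by
    rintro ⟨x, q⟩ ⟨x', q'⟩ h
    simp only at h
    obtain rfl := hinj q q' (by
      rw [show T q - T q' = x' - x by rw [sub_eq_sub_iff_add_eq_add, add_comm, h]]
      exact K.sub_mem x'.2 x.2)
    rw [add_left_inj] at h
    rw [Subtype.ext h], fun y => by
    obtain ⟨q, hq⟩ := hsurj y
    exact ⟨(⟨y - T q, hq⟩, q), by simp⟩⟩
  refine ⟨fun c => (ψ.symm.trans ((τ c).prodCongr (kleinPerm c))).trans ψ, fun y => ?_⟩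
  obtain ⟨⟨x, q⟩, rfl⟩ := ψ.surjective y
  have h1 := congrArg (K.subtype) (hτ x)
  have h2 := sum_kleinPerm h0 hs q
  simp only [Equiv.trans_apply, Equiv.symm_apply_apply]
  change ∑ c, (K.subtype (τ c x) + T (kleinPerm c q)) = 0
  rw [Finset.sum_add_distrib, h2, ← map_sum, h1, map_zero, add_zero]

end Klein

/-! ### Two-groups of exponent at most four -/

section TwoGroup

lemma exists_index_four {P : Type*} [AddCommGroup P] [Finite P] {r : ℕ}
    (hP : Nat.card P = 2 ^ (r + 2)) (W : AddSubgroup P) (hW : Nat.card W ≤ 2 ^ r) :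
    ∃ K : AddSubgroup P, W ≤ K ∧ Nat.card K = 2 ^ r ∧ K.index = 4 := by
  have : Fact (Nat.Prime 2) := ⟨Nat.prime_two⟩
  obtain ⟨n, -, hn⟩ := (Nat.dvd_prime_pow Nat.prime_two).1 (hP ▸ W.card_addSubgroup_dvd_card)
  have hnr : n ≤ r := by
    rw [hn] at hW
    exact (Nat.pow_le_pow_iff_right (by norm_num)).1 hW
  obtain ⟨K, hK, hle⟩ := Sylow.exists_subgroup_card_pow_prime_le 2 (G := Multiplicative P)
    (m := r) (n := n) (by
      change _ ∣ Nat.card P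
      rw [hP]; exact pow_dvd_pow 2 (by omega)) (AddSubgroup.toSubgroup W) hn hnr
  refine ⟨AddSubgroup.toSubgroup.symm K, hle, hK, ?_⟩
  have h1 := (AddSubgroup.toSubgroup.symm K).card_mul_index
  have h2 : Nat.card (AddSubgroup.toSubgroup.symm K) = 2 ^ r := hK
  rw [h2, hP, pow_add] at h1
  exact Nat.eq_of_mul_eq_mul_left (by positivity) h1

lemma exists_addEquiv {A P : Type*} [AddCommGroup A] [AddCommGroup P] [Finite P] (f : A →+ P)
    (hf : Function.Injective f) (hc : Nat.card A = Nat.card P) : Nonempty (A ≃+ P) :=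
  ⟨AddEquiv.ofBijective f ((Nat.bijective_iff_injective_and_card f).2 ⟨hf, hc⟩)⟩

lemma hom_injective {A P : Type*} [AddCommGroup A] [AddCommGroup P] (h4 : ∀ a : A, 4 • a = 0)
    (f : A →+ P) (hf : ∀ a, a + a = 0 → f a = 0 → a = 0) : Function.Injective f := by
  rw [injective_iff_map_eq_zero]
  intro a ha
  refine hf a (hf (a + a) ?_ (by rw [map_add, ha, add_zero])) ha
  have := h4 a
  rwa [show (4 : ℕ) • a = a + a + (a + a) by abel] at this

lemma exists_zmod_hom_nsmul {P : Type*} [AddCommGroup P] (m : ℕ) (g : P) (hg : m • g = 0) :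
    ∃ f : ZMod m →+ P, ∀ k : ℕ, f k = k • g := by
  refine ⟨ZMod.lift m ⟨zmultiplesHom P g, by simpa using hg⟩, fun k => ?_⟩
  have := ZMod.lift_coe m (⟨zmultiplesHom P g, by simpa using hg⟩ : { f : ℤ →+ P // f m = 0 }) k
  simpa using this

/-- Elementary two-groups: the groups of order four and eight are given by tables, and a larger one
has an elementary subgroup with Klein quotient. -/
lemma elementary_main (r : ℕ) : ∀ {P : Type*} [AddCommGroup P] [Finite P],
    (∀ x : P, x + x = 0) → Nat.card P = 2 ^ r → 2 ≤ r →
    HasTriple P ∧ HasRect P (ZMod 3) Set.univ 3 ∧ HasRect P ℤ (Set.Icc (-2) 2) 5 := by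
  induction r using Nat.strong_induction_on with
  | _ r ih =>
  intro P _ _ h2 hP hr
  have hequiv : ∀ {A : Type} [AddCommGroup A] [Finite A] [Module (ZMod 2) A],
      Nat.card A = 2 ^ r → Nonempty (A ≃+ P) := by
    intro A _ _ _ hA
    have : Fact (Nat.Prime 2) := ⟨Nat.prime_two⟩
    let _ : Module (ZMod 2) P := AddCommGroup.zmodModule (n := 2) (fun x => by rw [two_nsmul, h2])
    have e1 := Module.natCard_eq_pow_finrank (K := ZMod 2) (V := P)
    have e2 := Module.natCard_eq_pow_finrank (K := ZMod 2) (V := A)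
    rw [hP, Nat.card_zmod] at e1
    rw [hA, Nat.card_zmod] at e2
    obtain ⟨e⟩ := FiniteDimensional.nonempty_linearEquiv_of_finrank_eq (R := ZMod 2)
      (M := A) (M' := P) (Nat.pow_right_injective le_rfl (e2.symm.trans e1))
    exact ⟨e.toAddEquiv⟩
  obtain rfl | rfl | hr : r = 2 ∨ r = 3 ∨ 4 ≤ r := by omega
  · obtain ⟨e⟩ := hequiv (A := ZMod 2 × ZMod 2) (by simp)
    exact ⟨hasTriple_22.congr e, hasRect_22_three.congr e, hasRect_22_five.congr e⟩
  · obtain ⟨e⟩ := hequiv (A := ZMod 2 × ZMod 2 × ZMod 2) (by simp)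
    exact ⟨hasTriple_222.congr e, hasRect_222_three.congr e, hasRect_222_five.congr e⟩
  · obtain ⟨s, rfl⟩ : ∃ s, r = s + 2 := ⟨r - 2, by omega⟩
    obtain ⟨K, -, hK, hi⟩ := exists_index_four hP ⊥ (by simp [Nat.one_le_pow])
    obtain ⟨i1, i2, i3⟩ := ih s (by omega) (P := K) (fun x => Subtype.ext (h2 x)) hK (by omega)
    exact ⟨i1.klein hi (fun x => by rw [h2]; exact K.zero_mem),
      i2.klein_elementary hi h2 (by norm_num), i3.klein_elementary hi h2 (by norm_num)⟩

/-- Adjoining `x` to `D` gives at most `D ∪ (x + D)`. -/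
lemma exists_adjoin {P : Type*} [AddCommGroup P] [Finite P] (D : AddSubgroup P) {x : P}
    (hx : x + x ∈ D) : ∃ W : AddSubgroup P, D ≤ W ∧ x ∈ W ∧ Nat.card W ≤ 2 * Nat.card D := by
  let W : AddSubgroup P :=
    { carrier := {y | y ∈ D ∨ y - x ∈ D}
      zero_mem' := Or.inl D.zero_mem
      add_mem' := by
        rintro y z (hy | hy) (hz | hz)
        · exact Or.inl (D.add_mem hy hz)
        · exact Or.inr (by rw [add_sub_assoc]; exact D.add_mem hy hz)
        · exact Or.inr (by rw [add_sub_right_comm]; exact D.add_mem hy hz)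
        · refine Or.inl ?_
          have := D.add_mem (D.add_mem hy hz) hx
          rwa [show y - x + (z - x) + (x + x) = y + z by abel] at this
      neg_mem' := by
        rintro y (hy | hy)
        · exact Or.inl (D.neg_mem hy)
        · refine Or.inr ?_
          have := D.neg_mem (D.add_mem hy hx)
          rwa [show -(y - x + (x + x)) = -y - x by abel] at this }
  refine ⟨W, fun y hy => Or.inl hy, Or.inr (by rw [sub_self]; exact D.zero_mem), ?_⟩
  have hsub : (W : Set P) ⊆ (D : Set P) ∪ (fun y => y + x) '' (D : Set P) := by
    rintro y (hy | hy)
    · exact Or.inl hy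
    · exact Or.inr ⟨y - x, hy, sub_add_cancel y x⟩
  have h1 := (Set.ncard_le_ncard hsub).trans (Set.ncard_union_le _ _)
  have h2 := Set.ncard_image_le (f := fun y => y + x) (Set.toFinite (D : Set P))
  have h3 : Nat.card W = (W : Set P).ncard := rfl
  have h4 : Nat.card D = (D : Set P).ncard := rfl
  omega

lemma exists_notMem_of_card {P : Type*} (X : Set P) (s : Finset P) (h : s.card < X.ncard) :
    ∃ x ∈ X, x ∉ s := by
  by_contra! hc
  have := Set.ncard_le_ncard (s := X) (t := s) hc s.finite_toSet
  rw [Set.ncard_coe_finset] at this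
  omega

lemma prod_hom_injective {P : Type*} [AddCommGroup P] {g f : P} (hg4 : 4 • g = 0)
    (hg : g + g ≠ 0) (hf0 : f ≠ 0) (hf : f + f = 0) (hfg : f ≠ g + g) :
    ∃ φ : ZMod 4 × ZMod 2 →+ P, Function.Injective φ := by
  obtain ⟨α, hα⟩ := exists_zmod_hom_nsmul 4 g hg4
  obtain ⟨β, hβ⟩ := exists_zmod_hom_nsmul 2 f (by rw [two_nsmul, hf])
  refine ⟨α.coprod β, hom_injective (by decide) _ ?_⟩
  have key : ∀ a : ZMod 4 × ZMod 2, a + a = 0 → a = 0 ∨ a = (2, 0) ∨ a = (0, 1) ∨ a = (2, 1) := by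
    decide
  have hα2 : α 2 = g + g := (hα 2).trans (two_nsmul g)
  have hβ1 : β 1 = f := by simpa using hβ 1
  intro a ha h
  obtain rfl | rfl | rfl | rfl := key a ha
  · rfl
  · simp [hα2, hg] at h
  · simp [hβ1, hf0] at h
  · simp only [AddMonoidHom.coprod_apply, hα2, hβ1] at h
    refine absurd ?_ hfg
    rw [← sub_eq_zero, ← neg_eq_zero, neg_sub, ← h, sub_eq_add_neg,
      neg_eq_of_add_eq_zero_left hf]

/-- Two-groups of exponent four with at least two involutions. In order at least `32` a subgroup
with Klein quotient is found above the group `2P` of squares, and it can be made to contain a given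
element of order four and an involution which is not its double. -/
lemma nonelementary_main (r : ℕ) : ∀ {P : Type*} [AddCommGroup P] [Finite P] {g f : P},
    (∀ x : P, 4 • x = 0) → Nat.card P = 2 ^ r → g + g ≠ 0 → f ≠ 0 → f + f = 0 → f ≠ g + g →
    HasTriple P ∧ HasRect P ℤ (Set.Icc (-1) 1) 3 := by
  induction r using Nat.strong_induction_on with
  | _ r ih =>
  intro P _ _ g f h4 hP hg hf0 hf hfg
  have hgg : ∀ x : P, x + x + (x + x) = 0 := fun x => by
    rw [← h4 x]; abel
  obtain ⟨φ, hφ⟩ := prod_hom_injective (h4 g) hg hf0 hf hfg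
  have hr : 3 ≤ r := by
    have := Nat.card_le_card_of_injective φ hφ
    rw [hP, Nat.card_prod, Nat.card_zmod, Nat.card_zmod] at this
    by_contra! h
    interval_cases r <;> omega
  obtain rfl | hr : r = 3 ∨ 4 ≤ r := by omega
  · obtain ⟨e⟩ := exists_addEquiv φ hφ (by rw [hP]; simp)
    exact ⟨hasTriple_42.congr e, hasRect_42.congr e⟩
  have hD := card_double_mul (Γ := P) 2
  rw [hP] at hD
  set D := (nsmulAddMonoidHom (α := P) 2).range with hDdef
  set E := (nsmulAddMonoidHom (α := P) 2).ker with hEdef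
  have hmemD : ∀ x : P, x + x ∈ D := fun x => ⟨x, two_nsmul x⟩
  have hmemE : ∀ x : P, x ∈ E ↔ x + x = 0 := fun x => by
    rw [hEdef, AddMonoidHom.mem_ker, nsmulAddMonoidHom_apply, two_nsmul]
  have hDE : D ≤ E := by
    rintro _ ⟨x, rfl⟩
    rw [hmemE, nsmulAddMonoidHom_apply, two_nsmul]
    exact hgg x
  obtain rfl | hr : r = 4 ∨ 5 ≤ r := by omega
  · by_cases hh : ∃ h : P, h + h ≠ 0 ∧ h + h ≠ g + g
    · obtain ⟨h, hh0, hhg⟩ := hh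
      obtain ⟨α, hα⟩ := exists_zmod_hom_nsmul 4 g (h4 g)
      obtain ⟨β, hβ⟩ := exists_zmod_hom_nsmul 4 h (h4 h)
      have hα2 : α 2 = g + g := (hα 2).trans (two_nsmul g)
      have hβ2 : β 2 = h + h := (hβ 2).trans (two_nsmul h)
      obtain ⟨e⟩ := exists_addEquiv (α.coprod β) (hom_injective (by decide) _ (by
        have key : ∀ a : ZMod 4 × ZMod 4, a + a = 0 →
            a = 0 ∨ a = (2, 0) ∨ a = (0, 2) ∨ a = (2, 2) := by decide
        intro a ha h
        obtain rfl | rfl | rfl | rfl := key a ha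
        · rfl
        · simp [hα2, hg] at h
        · simp [hβ2, hh0] at h
        · simp only [AddMonoidHom.coprod_apply, hα2, hβ2] at h
          refine absurd ?_ hhg
          rw [← sub_eq_zero, ← neg_eq_zero, neg_sub, ← h, sub_eq_add_neg,
            neg_eq_of_add_eq_zero_left (hgg _)])) (by rw [hP]; simp)
      exact ⟨hasTriple_44.congr e, hasRect_44.congr e⟩
    · push Not at hh
      have key : ∀ a : ZMod 4 × ZMod 2 × ZMod 2, a + a = 0 →
          a ∈ ([0, (2, 0, 0), (0, 1, 0), (2, 1, 0), (0, 0, 1), (2, 0, 1), (0, 1, 1), (2, 1, 1)] :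
            List (ZMod 4 × ZMod 2 × ZMod 2)) := by decide
      simp only [List.mem_cons, List.not_mem_nil, or_false] at key
      have hDc : Nat.card D ≤ 2 := by
        have hsub : (D : Set P) ⊆ ({0, g + g} : Set P) := by
          rintro _ ⟨x, rfl⟩
          rw [nsmulAddMonoidHom_apply, two_nsmul]
          by_cases hx : x + x = 0
          · exact Or.inl hx
          · exact Or.inr (hh x hx)
        exact (Set.ncard_le_ncard hsub).trans
          ((Set.ncard_insert_le _ _).trans (by rw [Set.ncard_singleton]))
      have hEc : 8 ≤ (E : Set P).ncard := by
        change 8 ≤ Nat.card E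
        nlinarith
      classical
      obtain ⟨u, huE, hu⟩ := exists_notMem_of_card (E : Set P) {0, g + g, f, f + (g + g)}
        (lt_of_le_of_lt Finset.card_le_four (by omega))
      simp only [Finset.mem_insert, Finset.mem_singleton, not_or] at hu
      obtain ⟨hu0, hug, huf, hufg⟩ := hu
      have hu2 := (hmemE u).1 huE
      obtain ⟨α, hα⟩ := exists_zmod_hom_nsmul 4 g (h4 g)
      obtain ⟨β, hβ⟩ := exists_zmod_hom_nsmul 2 f (by rw [two_nsmul, hf])
      obtain ⟨γ, hγ⟩ := exists_zmod_hom_nsmul 2 u (by rw [two_nsmul, hu2])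
      have hα2 : α 2 = g + g := (hα 2).trans (two_nsmul g)
      have hβ1 : β 1 = f := by simpa using hβ 1
      have hγ1 : γ 1 = u := by simpa using hγ 1
      have hng : -(g + g) = g + g := neg_eq_of_add_eq_zero_left (hgg g)
      have hnf : -f = f := neg_eq_of_add_eq_zero_left hf
      obtain ⟨e⟩ := exists_addEquiv (α.coprod (β.coprod γ)) (hom_injective (by decide) _ (by
        intro a ha h
        obtain rfl | rfl | rfl | rfl | rfl | rfl | rfl | rfl := key a ha
        · rfl
        · simp [hα2, hg] at h
        · simp [hβ1, hf0] at h
        · simp only [AddMonoidHom.coprod_apply, hα2, hβ1, map_zero, add_zero] at h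
          exact absurd ((eq_neg_of_add_eq_zero_right h).trans hng) hfg
        · simp [hγ1, hu0] at h
        · simp only [AddMonoidHom.coprod_apply, hα2, hγ1, map_zero, zero_add] at h
          exact absurd ((eq_neg_of_add_eq_zero_right h).trans hng) hug
        · simp only [AddMonoidHom.coprod_apply, hβ1, hγ1, map_zero, zero_add] at h
          exact absurd ((eq_neg_of_add_eq_zero_right h).trans hnf) huf
        · simp only [AddMonoidHom.coprod_apply, hα2, hβ1, hγ1] at h
          rw [← add_assoc] at h
          refine absurd ((eq_neg_of_add_eq_zero_right h).trans ?_) hufg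
          rw [neg_add, hng, hnf, add_comm])) (by rw [hP]; simp)
      exact ⟨hasTriple_422.congr e, hasRect_422.congr e⟩
  obtain ⟨s, rfl⟩ : ∃ s, r = s + 2 := ⟨r - 2, by omega⟩
  obtain ⟨d, -, hd⟩ := (Nat.dvd_prime_pow Nat.prime_two).1 (hP ▸ D.card_addSubgroup_dvd_card)
  have hds : 2 * d ≤ s + 2 := by
    have h1 : Nat.card D ≤ Nat.card E := Nat.card_le_card_of_injective _
      (AddSubgroup.inclusion_injective hDE)
    have h2 : 2 ^ (2 * d) ≤ 2 ^ (s + 2) := by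
      rw [← hD, two_mul, pow_add, ← hd]
      exact Nat.mul_le_mul_left _ h1
    exact (Nat.pow_le_pow_iff_right (by norm_num)).1 h2
  obtain ⟨W₁, hDW, hgW, hW₁⟩ := exists_adjoin D (hmemD g)
  obtain ⟨W, f', hDW, hgW, hfW, hW, hf0, hf, hfg⟩ : ∃ (W : AddSubgroup P) (f' : P), D ≤ W ∧ g ∈ W ∧
      f' ∈ W ∧ Nat.card W ≤ 2 ^ s ∧ f' ≠ 0 ∧ f' + f' = 0 ∧ f' ≠ g + g := by
    by_cases h2 : Nat.card D ≤ 2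
    · obtain ⟨W, hW1, hfW, hW⟩ := exists_adjoin W₁ (x := f) (by rw [hf]; exact W₁.zero_mem)
      refine ⟨W, f, hDW.trans hW1, hW1 hgW, hfW, ?_, hf0, hf, hfg⟩
      calc Nat.card W ≤ 2 ^ 3 := by omega
        _ ≤ 2 ^ s := Nat.pow_le_pow_right (by norm_num) (by omega)
    · classical
      obtain ⟨f', hfD, hf'⟩ := exists_notMem_of_card (D : Set P) {0, g + g}
        (lt_of_le_of_lt Finset.card_le_two (by change 2 < Nat.card D; omega))
      simp only [Finset.mem_insert, Finset.mem_singleton, not_or] at hf'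
      refine ⟨W₁, f', hDW, hgW, hDW hfD, ?_, hf'.1, (hmemE f').1 (hDE hfD), hf'.2⟩
      calc Nat.card W₁ ≤ 2 ^ (d + 1) := by rw [pow_succ, ← hd]; omega
        _ ≤ 2 ^ s := Nat.pow_le_pow_right (by norm_num) (by omega)
  obtain ⟨K, hWK, hK, hi⟩ := exists_index_four hP W hW
  obtain ⟨i1, i2⟩ := ih s (by omega) (P := K) (g := ⟨g, hWK hgW⟩) (f := ⟨f', hWK hfW⟩)
    (fun x => Subtype.ext (h4 x)) hK (fun h => hg (congrArg Subtype.val h))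
    (fun h => hf0 (congrArg Subtype.val h)) (Subtype.ext hf)
    (fun h => hfg (congrArg Subtype.val h))
  have hK2 : ∀ x, x + x ∈ K := fun x => hWK (hDW (hmemD x))
  exact ⟨i1.klein hi hK2, i2.klein_three hi hK2⟩

/-- Enlarging the interval by one on both sides adds two rows: the elements with second coordinate
`±(k + 1)` are cut into `2 × 2` squares with row sum `0`. -/
lemma HasRect.succ {P : Type*} [AddCommGroup P] [Finite P] {e : P} (he : e ≠ 0) (he2 : e + e = 0)
    (k : ℕ) (h : HasRect P ℤ (Set.Icc (-(k : ℤ)) k) (2 * k + 1)) :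
    HasRect P ℤ (Set.Icc (-((k + 1 : ℕ) : ℤ)) (k + 1 : ℕ)) (2 * (k + 1) + 1) := by
  classical
  have := Fintype.ofFinite P
  obtain ⟨n, δ, h⟩ := h
  have hn := h.ncard
  rw [Set.ncard_prod, Set.ncard_univ, ncard_Icc_int] at hn
  have hn' : Nat.card P = n * 4 := by
    rw [show ((k : ℤ) + 1 - -(k : ℤ)).toNat = 2 * k + 1 by omega,
      show n * ((2 * k + 1) * 4) = n * 4 * (2 * k + 1) by ring] at hn
    exact Nat.eq_of_mul_eq_mul_right (by omega) hn
  let Y : Finset (P × ℤ) := Finset.univ ×ˢ {(k + 1 : ℤ), -(k + 1 : ℤ)}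
  have hY : ∀ x : P × ℤ, x ∈ Y ↔ x.2 = k + 1 ∨ x.2 = -(k + 1) := fun x => by simp [Y]
  obtain ⟨m, hm⟩ := exists_mag_two_two (ω := (0 : P × ℤ)) (ι := (e, 0))
    (fun h => he (congrArg Prod.fst h)) (by simp [he2]) Y
    (fun x hx => by
      rw [hY] at hx ⊢
      simpa using hx)
    (fun x hx => by
      rw [hY] at hx ⊢
      simp only [zero_sub, Prod.snd_neg]
      omega)
    (fun x hx h => by
      rw [hY] at hx
      have := congrArg Prod.snd h
      simp only [Prod.snd_add, Prod.snd_zero] at this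
      omega)
    (fun x hx h => by
      rw [hY] at hx
      have := congrArg Prod.snd h
      simp only [Prod.snd_add, Prod.snd_zero] at this
      omega)
  have hmn : m = n * 2 := by
    have := hm.ncard
    rw [Set.ncard_coe_finset, Finset.card_product, Finset.card_univ, ← Nat.card_eq_fintype_card,
      hn', Finset.card_pair (by omega)] at this
    omega
  subst hmn
  have h2 := hm.transpose.stack.transpose
  rw [smul_zero] at h2
  have h3 := h.vunion h2 (by
    rw [Set.disjoint_left]
    rintro x ⟨-, hx⟩ hx'
    rw [Finset.mem_coe, hY] at hx'
    rw [Set.mem_Icc] at hx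
    omega)
  refine ⟨n, _, (congrArg (fun X => Mag X n _ 4 0 _) ?_).mp h3⟩
  ext x
  simp only [Set.mem_union, Set.mem_prod, Set.mem_univ, true_and, Set.mem_Icc, Finset.mem_coe, hY]
  push_cast
  omega

lemma HasRect.mono {P : Type*} [AddCommGroup P] [Finite P] {e : P} (he : e ≠ 0) (he2 : e + e = 0)
    {k l : ℕ} (hkl : k ≤ l) (h : HasRect P ℤ (Set.Icc (-(k : ℤ)) k) (2 * k + 1)) :
    HasRect P ℤ (Set.Icc (-(l : ℤ)) l) (2 * l + 1) := by
  induction l, hkl using Nat.le_induction with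
  | base => exact h
  | succ l _ ih => exact ih.succ he he2

/-- The interval `{-k, …, k}` represents the residues modulo `2 * k + 1`. -/
lemma HasRect.zmod {P : Type*} [AddCommGroup P] (k : ℕ)
    (h : HasRect P ℤ (Set.Icc (-(k : ℤ)) k) (2 * k + 1)) :
    HasRect P (ZMod (2 * k + 1)) Set.univ (2 * k + 1) := by
  have hinj : Set.InjOn (Int.castAddHom (ZMod (2 * k + 1))) (Set.Icc (-(k : ℤ)) k) := by
    intro x hx y hy h
    rw [Set.mem_Icc] at hx hy
    have hd := (ZMod.intCast_eq_intCast_iff_dvd_sub x y (2 * k + 1)).1 h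
    have := Int.eq_zero_of_abs_lt_dvd hd (by rw [abs_lt]; push_cast; omega)
    omega
  have := h.map_right _ hinj
  refine (congrArg (fun X => HasRect P _ X _) (Set.eq_univ_of_forall fun x => ?_)).mp this
  refine ⟨x.valMinAbs, ?_, ZMod.coe_valMinAbs x⟩
  have := x.valMinAbs_mem_Ioc
  rw [Set.mem_Ioc] at this
  rw [Set.mem_Icc]
  push_cast at this
  omega

/-- A two-group of exponent at most four with two involutions has a zero-sum triple of permutations,
and its product with a cyclic group of odd prime order `p` is cut into `p × 4` rectangles. -/
lemma two_group_main {P : Type*} [AddCommGroup P] [Finite P] {r : ℕ} {e e' : P}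
    (h4 : ∀ x : P, 4 • x = 0) (hP : Nat.card P = 2 ^ r) (he : e ≠ 0) (he2 : e + e = 0)
    (he' : e' ≠ 0) (he2' : e' + e' = 0) (hee : e ≠ e') :
    HasTriple P ∧ ∀ p : ℕ, p.Prime → Odd p → HasRect P (ZMod p) Set.univ p := by
  by_cases h2 : ∀ x : P, x + x = 0
  · have hr : 2 ≤ r := by
      have h3 : 3 ≤ Nat.card P := by
        classical
        have : ({0, e, e'} : Set P).ncard = 3 := by
          rw [Set.ncard_eq_three]
          exact ⟨0, e, e', he.symm, he'.symm, hee, rfl⟩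
        rw [← this, ← Set.ncard_univ]
        exact Set.ncard_le_ncard (Set.subset_univ _)
      by_contra! h
      interval_cases r <;> omega
    obtain ⟨i1, i2, i3⟩ := elementary_main r h2 hP hr
    refine ⟨i1, fun p hp ⟨k, hk⟩ => ?_⟩
    have hp2 := hp.two_le
    obtain rfl | hk2 : k = 1 ∨ 2 ≤ k := by omega
    · subst hk; exact i2
    · subst hk; exact (HasRect.mono he he2 hk2 i3).zmod k
  · push Not at h2
    obtain ⟨g, hg⟩ := h2
    obtain ⟨f, hf0, hf, hfg⟩ : ∃ f : P, f ≠ 0 ∧ f + f = 0 ∧ f ≠ g + g := by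
      by_cases h : e = g + g
      · exact ⟨e', he', he2', fun h' => hee (h.trans h'.symm)⟩
      · exact ⟨e, he, he2, h⟩
    obtain ⟨i1, i2⟩ := nonelementary_main r h4 hP hg hf0 hf hfg
    refine ⟨i1, fun p hp ⟨k, hk⟩ => ?_⟩
    have hp2 := hp.two_le
    subst hk
    exact (HasRect.mono (k := 1) he he2 (by omega) i2).zmod k

end TwoGroup

/-! ### Groups of even order with two involutions -/

section EvenOrder

variable {Γ : Type*} [AddCommGroup Γ] [Finite Γ]

/-- The decomposition into the kernel `P` and the image `O` of multiplication by four, which are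
the two-part and the odd part when no element has order eight. -/
lemma exists_decomposition (h8 : ¬ 8 ∣ AddMonoid.exponent Γ) : ∃ (P O : AddSubgroup Γ) (r : ℕ),
    Odd (Nat.card O) ∧ (∀ x, x ∈ P ↔ 4 • x = 0) ∧ Nat.card P = 2 ^ r ∧
    (∀ x ∈ P, x ∈ O → x = 0) ∧ Nat.card P * Nat.card O = Nat.card Γ := by
  have key : ∀ y : Γ, 16 • y = 0 → 4 • y = 0 := by
    intro y hy
    obtain ⟨k, -, hk⟩ := (Nat.dvd_prime_pow (m := 4) Nat.prime_two).1
      (addOrderOf_dvd_of_nsmul_eq_zero (x := y) (n := 2 ^ 4) (by simpa using hy))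
    have hk2 : k ≤ 2 := by
      by_contra! h
      refine h8 (dvd_trans ?_ (AddMonoid.addOrder_dvd_exponent y))
      rw [hk]
      exact pow_dvd_pow 2 h
    refine addOrderOf_dvd_iff_nsmul_eq_zero.1 ?_
    rw [hk]
    exact pow_dvd_pow 2 hk2
  have hmem : ∀ x : Γ, x ∈ (nsmulAddMonoidHom (α := Γ) 4).ker ↔ 4 • x = 0 := fun x => Iff.rfl
  have hdis : ∀ x : Γ, x ∈ (nsmulAddMonoidHom (α := Γ) 4).ker →
      x ∈ (nsmulAddMonoidHom (α := Γ) 4).range → x = 0 := by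
    rintro _ h ⟨y, rfl⟩
    refine key y ?_
    rw [hmem, nsmulAddMonoidHom_apply, smul_smul] at h
    exact h
  obtain ⟨r, hr⟩ : ∃ r, Nat.card (nsmulAddMonoidHom (α := Γ) 4).ker = 2 ^ r := by
    refine ⟨_, Nat.eq_prime_pow_of_unique_prime_dvd Nat.card_pos.ne' fun {q} hq hqd => ?_⟩
    have : Fact q.Prime := ⟨hq⟩
    obtain ⟨x, hx⟩ := exists_prime_addOrderOf_dvd_card' q hqd
    have : q ∣ 2 ^ 2 := by
      rw [← hx]
      exact addOrderOf_dvd_of_nsmul_eq_zero (Subtype.ext ((hmem x).1 x.2))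
    exact (Nat.prime_dvd_prime_iff_eq hq Nat.prime_two).1 (hq.dvd_of_dvd_pow this)
  refine ⟨_, (nsmulAddMonoidHom (α := Γ) 4).range, r, ?_, hmem, hr, hdis, ?_⟩
  · rw [← Nat.not_even_iff_odd]
    intro h
    have : Fact (Nat.Prime 2) := ⟨Nat.prime_two⟩
    obtain ⟨z, hz⟩ := exists_prime_addOrderOf_dvd_card' 2 h.two_dvd
    have h2 : (2 : ℕ) • (z : Γ) = 0 := by
      have := addOrderOf_nsmul_eq_zero z
      rw [hz] at this
      exact congrArg Subtype.val this
    have h4 : (4 : ℕ) • (z : Γ) = 0 := by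
      have := congrArg (fun w : Γ => 2 • w) h2
      rwa [smul_smul, smul_zero] at this
    have h0 : z = 0 := Subtype.ext (hdis z ((hmem _).2 h4) z.2)
    rw [h0, addOrderOf_zero] at hz
    omega
  · rw [mul_comm, card_double_mul]

/-- Sufficiency with one odd side `a`: the odd part of `Γ` carries `a × b` rectangles if `b` is odd as well,
and a zero-sum triple of permutations of the two-part lifts them. If `4 ∣ b` then `p × 4`
rectangles of the product of the two-part with a subgroup of prime order `p ∣ a` suffice. -/
lemma exists_mag_odd_left (h8 : ¬ 8 ∣ AddMonoid.exponent Γ) {a b c : ℕ} (ha : 1 < a) (hb : 1 < b)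
    (hcard : Nat.card Γ = a * b * c) (hao : Odd a) (hb2 : b ≠ 2) {e e' : Γ} (he : e ≠ 0)
    (he2 : e + e = 0) (he' : e' ≠ 0) (he2' : e' + e' = 0) (hee : e ≠ e') :
    ∃ ω δ, Mag (Set.univ : Set Γ) c a b ω δ := by
  obtain ⟨P, O, r, hO, hP4, hP, hdis, hPO⟩ := exists_decomposition h8
  have hmemP : ∀ x : Γ, x + x = 0 → x ∈ P := fun x hx => (hP4 x).2 (by
    rw [show (4 : ℕ) • x = x + x + (x + x) by abel, hx, add_zero])
  obtain ⟨hT, hR⟩ := two_group_main (P := P) (e := ⟨e, hmemP e he2⟩) (e' := ⟨e', hmemP e' he2'⟩)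
    (fun x => Subtype.ext ((hP4 x).1 x.2)) hP (fun h => he (congrArg Subtype.val h))
    (Subtype.ext he2) (fun h => he' (congrArg Subtype.val h)) (Subtype.ext he2')
    (fun h => hee (congrArg Subtype.val h))
  have odd_odd : ∀ {b c : ℕ}, 1 < b → Nat.card Γ = a * b * c → Odd b →
      ∃ ω δ, Mag (Set.univ : Set Γ) c a b ω δ := by
    intro b c hb hcard hbo
    obtain ⟨c', hc'⟩ : a * b ∣ Nat.card O := by
      refine Nat.Coprime.dvd_of_dvd_mul_left (m := Nat.card P) ?_ ⟨c, hPO.trans hcard⟩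
      rw [hP]
      exact (Nat.coprime_two_right.2 (hao.mul hbo)).pow_right r
    obtain ⟨ω, δ, h⟩ := exists_mag_odd (Γ := O) ha hb hc' hao hbo hO
    have := Fintype.ofFinite P
    have h1 := (h.map O.subtype O.subtype_injective.injOn).lift_hom ha hb P.subtype (by
      rintro _ ⟨x, -, rfl⟩ _ ⟨x', -, rfl⟩ q q' h
      have hq : (q : Γ) - q' = x' - x := by
        rw [sub_eq_sub_iff_add_eq_add, add_comm]
        exact h
      refine Subtype.ext (sub_eq_zero.1 (hdis _ (P.sub_mem q.2 q'.2) ?_))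
      rw [hq]
      exact O.sub_mem x'.2 x.2) hT
    have h2 := Set.eq_of_subset_of_ncard_le (Set.subset_univ _) (by
      rw [h1.ncard, Set.ncard_univ, ← hPO, hc', ← Nat.card_eq_fintype_card]
      exact le_of_eq (by ring))
    exact (h2 ▸ h1).resize dvd_rfl dvd_rfl (by omega) (by omega) hcard
  obtain hbo | hbe := (Nat.even_or_odd b).symm
  · exact odd_odd hb hcard hbo
  obtain ⟨d, rfl⟩ := hbe.two_dvd
  obtain hdo | hde := (Nat.even_or_odd d).symm
  · obtain ⟨ω, δ, h⟩ := odd_odd (b := d) (c := 2 * c) (by omega) (by rw [hcard]; ring) hdo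
    exact h.resize dvd_rfl (Dvd.intro_left 2 rfl) (by omega) (by omega) hcard
  · obtain ⟨p, hp, hpa⟩ := Nat.exists_prime_and_dvd ha.ne'
    have hpo := hao.of_dvd_nat hpa
    have : Fact p.Prime := ⟨hp⟩
    obtain ⟨g, hg⟩ := exists_prime_addOrderOf_dvd_card' (G := Γ) p
      (by rw [hcard, mul_assoc]; exact hpa.mul_right _)
    obtain ⟨f, hf⟩ := exists_zmod_hom g hg
    have hφ : Function.Injective (P.subtype.coprod f) := by
      rw [injective_iff_map_eq_zero]
      rintro ⟨q, t⟩ h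
      have h' : (q : Γ) + f t = 0 := h
      have h4 : 4 • f t = 0 := by
        rw [← hP4, eq_neg_of_add_eq_zero_right h']
        exact P.neg_mem q.2
      have hpt : p • f t = 0 := by rw [← map_nsmul]; simp
      have hft : f t = 0 := by
        have h1 := Nat.dvd_gcd (addOrderOf_dvd_of_nsmul_eq_zero h4)
          (addOrderOf_dvd_of_nsmul_eq_zero hpt)
        rw [((Nat.coprime_two_left.2 hpo).pow_left 2 : Nat.gcd 4 p = 1), Nat.dvd_one,
          AddMonoid.addOrderOf_eq_one_iff] at h1
        exact h1
      rw [hft, add_zero] at h'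
      exact Prod.ext (Subtype.ext h') (hf (hft.trans (map_zero f).symm))
    obtain ⟨n, δ, h⟩ := hR p hp hpo
    have h1 := h.map _ hφ.injOn
    rw [Set.univ_prod_univ, Set.image_univ, ← AddMonoidHom.coe_range] at h1
    obtain ⟨n', h2⟩ := h1.extend_odd hp.two_le (by norm_num) (by
      have h3 := (P.subtype.coprod f).range.card_mul_index
      rw [← hPO, Nat.card_congr (AddMonoidHom.ofInjective hφ).toEquiv.symm, Nat.card_prod,
        mul_assoc] at h3
      have h4 := Nat.eq_of_mul_eq_mul_left Nat.card_pos h3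
      exact hO.of_dvd_nat ⟨_, by rw [← h4, mul_comm]⟩)
    exact h2.resize hpa (by obtain ⟨m, rfl⟩ := hde.two_dvd; exact ⟨m, by ring⟩) (by omega)
      (by omega) hcard

end EvenOrder

/-! ### Necessary conditions -/

section Necessity

variable {Γ : Type*} [AddCommGroup Γ] [Fintype Γ] {a b c : ℕ}

lemma isMagicRectangleSet_iff : IsMagicRectangleSet Γ a b c ↔
    ∃ ω δ, Mag (Set.univ : Set Γ) c a b ω δ := by
  constructor
  · rintro ⟨x, ω, δ, hx, hr, hc⟩
    exact ⟨ω, δ, x, hx.1, hx.2.range_eq, hr, hc⟩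
  · rintro ⟨ω, δ, x, hx, hX, hr, hc⟩
    exact ⟨x, ω, δ, ⟨hx, Set.range_eq_univ.1 hX⟩, hr, hc⟩

lemma IsMagicRectangleSet.symm (h : IsMagicRectangleSet Γ a b c) :
    IsMagicRectangleSet Γ b a c := by
  rw [isMagicRectangleSet_iff] at h ⊢
  obtain ⟨ω, δ, h⟩ := h
  exact ⟨δ, ω, h.transpose⟩

/-- If `Γ` has a unique involution, that involution is the sum of all elements, whereas `a` times
the sum of all elements is `|Γ| • δ = 0`. -/
lemma IsMagicRectangleSet.inClassG (h : IsMagicRectangleSet Γ a b c)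
    (hcard : Fintype.card Γ = a * b * c) (hao : Odd a) : InClassG Γ := by
  classical
  by_contra hG
  rw [InClassG, not_or, Nat.not_odd_iff_even, not_lt, Finite.card_le_one_iff_subsingleton] at hG
  obtain ⟨he, hs⟩ := hG
  have : Fact (Nat.Prime 2) := ⟨Nat.prime_two⟩
  obtain ⟨ι, hι⟩ := exists_prime_addOrderOf_dvd_card (G := Γ) 2 he.two_dvd
  have hι0 : ι ≠ 0 := by
    rintro rfl
    rw [addOrderOf_zero] at hι
    omega
  have hι2 : ι + ι = 0 := by
    have := addOrderOf_nsmul_eq_zero ι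
    rwa [hι, two_nsmul] at this
  have huniq : ∀ x : Γ, x ≠ 0 → x + x = 0 → x = ι := fun x h0 h2 =>
    congrArg Subtype.val (hs.elim ⟨x, h0, h2⟩ ⟨ι, hι0, hι2⟩)
  have hsum : ∑ x : Γ, x = ι := by
    rw [← Finset.add_sum_erase _ _ (Finset.mem_univ ι)]
    refine (congrArg (ι + ·) ?_).trans (add_zero ι)
    refine Finset.sum_involution (fun x _ => -x) (fun x _ => add_neg_cancel x) ?_ ?_ ?_
    · intro x hx h0 h
      exact Finset.ne_of_mem_erase hx (huniq x h0 (by nth_rewrite 1 [← h]; exact neg_add_cancel x))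
    · intro x hx
      refine Finset.mem_erase.2 ⟨fun h => Finset.ne_of_mem_erase hx ?_, Finset.mem_univ _⟩
      rw [← neg_neg x, h, neg_eq_of_add_eq_zero_left hι2]
    · intro x hx
      exact neg_neg x
  obtain ⟨x, ω, δ, hx, -, hc⟩ := h
  have htot : ι = c • b • δ := by
    rw [← hsum, ← hx.sum_comp, Fintype.sum_prod_type]
    simp_rw [Fintype.sum_prod_type_right, hc]
    simp
  obtain ⟨k, rfl⟩ := hao
  have h1 : (2 * k + 1) • ι = ι := by
    rw [add_smul, mul_comm, mul_smul, two_nsmul, hι2, smul_zero, zero_add, one_smul]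
  have h2 : (2 * k + 1) • ι = 0 := by
    rw [htot, smul_smul, smul_smul,
      show (2 * k + 1) * c * b = (2 * k + 1) * b * c by ring, ← hcard, card_nsmul_eq_zero]
  exact hι0 (h1.symm.trans h2)

/-- In a `2 × b` rectangle with `b` odd, `δ` is the double of some `y`; the cell below or above
`y` would contain `δ - y = y` again. -/
lemma not_isMagicRectangleSet_two (hcard : Fintype.card Γ = 2 * b * c) (hb : Odd b) :
    ¬ IsMagicRectangleSet Γ 2 b c := by
  rintro ⟨x, ω, δ, hx, hr, hc⟩
  have hc0 : 0 < c := by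
    have : 0 < Fintype.card Γ := Fintype.card_pos
    rw [hcard] at this
    exact Nat.pos_of_mul_pos_left this
  have hsum : ω + ω = b • δ := by
    have h1 : ∑ i : Fin 2, ∑ j, x (⟨0, hc0⟩, i, j) = ω + ω := by simp [hr, two_nsmul]
    rw [← h1, Finset.sum_comm]
    simp [hc]
  obtain ⟨m, rfl⟩ := hb
  obtain ⟨⟨s, i, j⟩, hy⟩ := hx.2 (ω - m • δ)
  have h2 : (ω - m • δ) + (ω - m • δ) = δ := by
    rw [sub_add_sub_comm, hsum, add_smul, mul_smul, one_smul, two_smul, add_sub_cancel_left]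
  have h3 := hc s j
  rw [Fin.sum_univ_two] at h3
  have h4 : x (s, 0, j) = x (s, 1, j) := by
    fin_cases i
    · have hy : x (s, 0, j) = _ := hy
      rw [hy] at h3 ⊢
      exact add_left_cancel (h2.trans h3.symm)
    · have hy : x (s, 1, j) = _ := hy
      rw [hy] at h3 ⊢
      exact add_right_cancel (h3.trans h2.symm)
  have := hx.1 h4
  simp at this

end Necessity


theorem stmt0 {Γ : Type*} [AddCommGroup Γ] [Fintype Γ] (a b c : ℕ)
    (ha : 1 < a) (hb : 1 < b) (hcard : Fintype.card Γ = a * b * c)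
    (hexp : ¬ (8 ∣ AddMonoid.exponent Γ)) :
    IsMagicRectangleSet Γ a b c ↔
      (Even a ∧ Even b) ∨
        (InClassG Γ ∧ ¬ ((a = 2 ∧ Odd b) ∨ (b = 2 ∧ Odd a))) := by
  have hcard' : Fintype.card Γ = b * a * c := by rw [hcard, mul_comm a b]
  have hN : Nat.card Γ = a * b * c := by rw [Nat.card_eq_fintype_card, hcard]
  constructor
  · intro h
    by_cases hab : Even a ∧ Even b
    · exact Or.inl hab
    refine Or.inr ⟨?_, ?_⟩
    · rw [not_and_or, Nat.not_even_iff_odd, Nat.not_even_iff_odd] at hab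
      exact hab.elim (h.inClassG hcard) (h.symm.inClassG hcard')
    · rintro (⟨rfl, hbo⟩ | ⟨rfl, hao⟩)
      · exact not_isMagicRectangleSet_two hcard hbo h
      · exact not_isMagicRectangleSet_two hcard' hao h.symm
  · rintro h
    by_cases hab : Even a ∧ Even b
    · obtain ⟨n, ω, δ, h⟩ := exists_mag_univ_two_two (Γ := Γ) (by
        rw [hN]
        exact (mul_dvd_mul hab.1.two_dvd hab.2.two_dvd).mul_right c)
      exact isMagicRectangleSet_iff.2
        (h.resize hab.1.two_dvd hab.2.two_dvd (by omega) (by omega) hN)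
    obtain ⟨hG, h2⟩ := h.resolve_left hab
    by_cases hodd : Odd (Fintype.card Γ)
    · have hab : Odd (a * b) := hodd.of_dvd_nat ⟨c, hcard⟩
      rw [Nat.odd_mul] at hab
      rw [← Nat.card_eq_fintype_card] at hodd
      exact isMagicRectangleSet_iff.2 (exists_mag_odd ha hb hN hab.1 hab.2 hodd)
    have hG := hG.resolve_left hodd
    rw [Finite.one_lt_card_iff_nontrivial] at hG
    obtain ⟨⟨e, he, he2⟩, ⟨e', he', he2'⟩, hee⟩ := hG
    have hee : e ≠ e' := fun h => hee (Subtype.ext h)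
    rw [not_and_or, Nat.not_even_iff_odd, Nat.not_even_iff_odd] at hab
    rw [not_or, not_and', not_and'] at h2
    obtain hao | hbo := hab
    · exact isMagicRectangleSet_iff.2
        (exists_mag_odd_left hexp ha hb hN hao (h2.2 hao) he he2 he' he2' hee)
    · refine (isMagicRectangleSet_iff.2 (exists_mag_odd_left hexp hb ha ?_ hbo (h2.1 hbo)
        he he2 he' he2' hee)).symm
      rw [hN, mul_comm a b]
end

section
/- Let Γ be a finite Abelian group of order 2^n with n > 1 such that Γ belongs to the class 𝒢 (i.e., Γ has more than one involution). Set m = 2·exp(Γ) if exp(Γ) = |Γ|/2, and m = max{4, exp(Γ)} if exp(Γ) < |Γ|/2. Then there exist a complete mapping φ of Γ and a partition S_1, S_2, …, S_t of the elements of Γ such that |S_i| = m, ∑_{s∈S_i} s = 0 and ∑_{s∈S_i} φ(s) = 0 for every i with 1 ≤ i ≤ t. -/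
/-- There exist a complete mapping `φ` of `Γ` and a partition of `Γ` into sets of size `m`,
each of which is zero-sum and whose image under `φ` is zero-sum. -/
def HasZeroSumCMPartition (Γ : Type*) [AddCommGroup Γ] [Fintype Γ] (m : ℕ) : Prop :=
  ∃ (φ : Γ → Γ) (t : ℕ) (S : Fin t → Finset Γ),
    Function.Bijective φ ∧
    Function.Bijective (fun x : Γ => x + φ x) ∧
    (∀ g : Γ, ∃! i, g ∈ S i) ∧
    (∀ i, (S i).card = m) ∧
    (∀ i, ∑ s ∈ S i, s = 0) ∧
    (∀ i, ∑ s ∈ S i, φ s = 0)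

/-! ### Hall's theorem on differences of permutations -/

section Hall

open Equiv

/-- If `a ≠ b`, then `a` and `b` lie in different cycles of `σ = τ` or of `σ = swap a b * τ`
(a transposition splits a cycle containing both points). The cycle of `σ` through `b`, extended by
the identity, is a permutation `c` fixing `a`. -/
theorem exists_perm_split {G : Type*} [Finite G] [DecidableEq G] (τ : Perm G) {a b : G} (hab :
    a ≠ b) :
    ∃ σ : Perm G, (σ = τ ∨ σ = swap a b * τ) ∧
      ∃ c : Perm G, c a = a ∧ c b = σ b ∧ ∀ x, c x = x ∨ c x = σ x := by
  classical
  have := Fintype.ofFinite G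
  suffices h : ∃ σ : Perm G, (σ = τ ∨ σ = swap a b * τ) ∧ ¬ σ.SameCycle b a by
    obtain ⟨σ, hσ, hs⟩ := h
    refine ⟨σ, hσ, σ.cycleOf b, ?_, Perm.cycleOf_apply_self σ b, fun x => ?_⟩
    · rw [Perm.cycleOf_apply, if_neg hs]
    · rw [Perm.cycleOf_apply]
      split_ifs <;> simp
  by_cases hs : τ.SameCycle b a
  swap
  · exact ⟨τ, Or.inl rfl, hs⟩
  refine ⟨swap a b * τ, Or.inr rfl, fun hs' => ?_⟩
  obtain ⟨k, hk, hmin⟩ : ∃ k : ℕ, (τ ^ k) b = a ∧ ∀ i < k, (τ ^ i) b ≠ a := by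
    have h : ∃ k : ℕ, (τ ^ k) b = a := by
      obtain ⟨k, -, hk⟩ := hs.exists_pow_eq'
      exact ⟨k, hk⟩
    exact ⟨Nat.find h, Nat.find_spec h, fun i hi => Nat.find_min h hi⟩
  -- the arc from `b` up to just before `a` is stable under `swap a b * τ`
  have harc : ∀ j : ℕ, ∃ i < k, ((swap a b * τ) ^ j) b = (τ ^ i) b := by
    intro j
    induction j with
    | zero =>
      refine ⟨0, Nat.pos_of_ne_zero ?_, rfl⟩
      rintro rfl
      exact hab hk.symm
    | succ j ih =>
      obtain ⟨i, hi, h⟩ := ih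
      rw [pow_succ', Perm.mul_apply, h, Perm.mul_apply, ← Perm.mul_apply τ, ← pow_succ']
      rcases Nat.lt_or_ge (i + 1) k with h1 | h1
      · refine ⟨i + 1, h1, swap_apply_of_ne_of_ne (hmin _ h1) fun h2 => ?_⟩
        refine hmin (k - (i + 1)) (by omega) ?_
        have h3 : (τ ^ (k - (i + 1))) ((τ ^ (i + 1)) b) = a := by
          rw [← Perm.mul_apply, ← pow_add, Nat.sub_add_cancel h1.le, hk]
        rwa [h2] at h3
      · obtain rfl : i + 1 = k := by omega
        exact ⟨0, by omega, by rw [hk, swap_apply_left]; rfl⟩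
  obtain ⟨j, -, hj⟩ := hs'.exists_pow_eq'
  obtain ⟨i, hi, h⟩ := harc j
  exact hmin i hi (h.symm.trans hj)

/-- The exchange step of Hall's theorem, normalised so that the old solution has `α = id`, `β = π`:
the differences `π x - x` agree with `d` away from `a`, `b`, and have the same sum as `d` over
`{a, b}`. With `K = a + b + d a`, one follows `τ x = π⁻¹ (K - x)` from `b`; on the resulting cycle
`c` not meeting `a`, the pair `α = c⁻¹`, `β = π * c * swap a b` realises `d`. -/
theorem exchange_of_id {G : Type*} [AddCommGroup G] [Finite G] (π : Perm G) (d : G → G) {a b : G}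
    (hab : a ≠ b) (hd : ∀ x, x ≠ a → x ≠ b → π x = x + d x)
    (hs : π a + π b = a + b + (d a + d b)) :
    ∃ α β : Perm G, ∀ x, β x = α x + d x := by
  classical
  -- the constant that the partial sums force along the chain of exchanges
  set K := a + b + d a with hK
  obtain ⟨σ, hσ, c, hca, hcb, hc⟩ :=
    exists_perm_split ((Equiv.subLeft K).trans π.symm) hab
  -- `π` or `π ∘ swap a b`: the hypotheses are symmetric under exchanging the values at `a` and `b`
  obtain ⟨ρ, hρσ, hρ, hρs⟩ : ∃ ρ : Perm G, (∀ x, ρ (σ x) = K - x) ∧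
      (∀ x, x ≠ a → x ≠ b → ρ x = x + d x) ∧ ρ a + ρ b = a + b + (d a + d b) := by
    rcases hσ with rfl | rfl
    · exact ⟨π, fun x => by simp, hd, hs⟩
    · refine ⟨π * swap a b, fun x => by simp, fun x h1 h2 => ?_, ?_⟩
      · rw [Perm.mul_apply, swap_apply_of_ne_of_ne h1 h2, hd x h1 h2]
      · simp [← hs, add_comm]
  refine ⟨c⁻¹, ρ * c * swap a b, fun x => ?_⟩
  simp only [Perm.mul_apply]
  by_cases hxa : x = a
  · subst hxa
    rw [swap_apply_left, hcb, hρσ, Perm.inv_eq_iff_eq.mpr hca.symm, hK]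
    abel
  obtain ⟨y, rfl⟩ := c.surjective x
  rw [show c⁻¹ (c y) = y from c.symm_apply_apply y]
  by_cases hxb : c y = b
  · have hy : σ y = b := by
      rcases hc y with h | h
      · have hyb : y = b := h.symm.trans hxb
        rw [hyb, ← hcb, ← hyb, h]
      · rw [← h, hxb]
    have h1 := hρσ y
    rw [hy] at h1
    rw [hxb, swap_apply_right, hca]
    have : ρ a = a + b + (d a + d b) - ρ b := eq_sub_of_add_eq hρs
    rw [this, h1, hK]
    abel
  rw [swap_apply_of_ne_of_ne hxa hxb]
  rcases hc (c y) with h | h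
  · rw [h, hρ _ hxa hxb, c.injective h]
  · have hy : c y = σ y := by
      rcases hc y with h' | h'
      · simpa [h'] using h
      · exact h'
    rw [h, hρσ]
    have h1 := hρσ y
    rw [← hy, hρ _ hxa hxb] at h1
    rw [sub_eq_iff_eq_add.mp h1.symm]
    abel

/-- If the differences `d` are realised by a pair of permutations, so is any `e` differing from `d`
only at two places and with the same sum there. -/
theorem exchange {G : Type*} [AddCommGroup G] [Finite G] (d e : G → G) {i j : G} (hij : i ≠ j)
    (hde : ∀ x, x ≠ i → x ≠ j → e x = d x) (hs : e i + e j = d i + d j)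
    (h : ∃ α β : Perm G, ∀ x, β x = α x + d x) :
    ∃ α β : Perm G, ∀ x, β x = α x + e x := by
  obtain ⟨α, β, h⟩ := h
  have hinv : ∀ y, α⁻¹ (α y) = y := α.symm_apply_apply
  obtain ⟨α', β', h'⟩ := exchange_of_id (β * α⁻¹) (e ∘ ⇑α⁻¹) (a := α i) (b := α j)
    (α.injective.ne hij) (fun x h1 h2 => by
      obtain ⟨y, rfl⟩ := α.surjective x
      simp only [Perm.mul_apply, hinv, Function.comp_apply, h]
      rw [hde y (fun h => h1 (by rw [h])) (fun h => h2 (by rw [h]))]) (by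
      simp only [Perm.mul_apply, hinv, Function.comp_apply, h, hs]
      abel)
  exact ⟨α' * α, β' * α, fun x => by simp [h']⟩

/-- Hall's theorem: every zero-sum family indexed by a finite abelian group `G` is the family of
differences of two permutations of `G`. Induction on the number of nonzero `d x`: merging two of them
into one place gives a smaller instance, from which `d` is recovered by one exchange. -/
theorem hall {G : Type*} [AddCommGroup G] [Fintype G] (d : G → G) (hd : ∑ x, d x = 0) :
    ∃ α β : Perm G, ∀ x, β x = α x + d x := by
  classical
  induction hn : (Finset.univ.filter fun x => d x ≠ 0).card using Nat.strong_induction_on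
    generalizing d with
  | _ n ih =>
  by_cases h0 : ∀ x, d x = 0
  · exact ⟨1, 1, fun x => by simp [h0]⟩
  push Not at h0
  obtain ⟨i, hi⟩ := h0
  obtain ⟨j, hji, hj⟩ : ∃ j, j ≠ i ∧ d j ≠ 0 := by
    by_contra! h
    rw [Finset.sum_eq_single i (fun j _ hj => h j hj) (by simp)] at hd
    exact hi hd
  set e := Function.update (Function.update d j (d i + d j)) i 0 with he
  have hei : e i = 0 := by simp [he]
  have hej : e j = d i + d j := by simp [he, hji]
  have hex : ∀ x, x ≠ i → x ≠ j → e x = d x := fun x h1 h2 => by simp [he, h1, h2]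
  refine exchange e d hji.symm (fun x h1 h2 => (hex x h1 h2).symm) (by rw [hei, hej, zero_add])
    (ih _ ?_ e ?_ rfl)
  · rw [← hn]
    refine Finset.card_lt_card ⟨fun x hx => ?_, fun h => ?_⟩
    · simp only [Finset.mem_filter, Finset.mem_univ, true_and] at hx ⊢
      by_cases h1 : x = i
      · rwa [h1]
      by_cases h2 : x = j
      · rwa [h2]
      rwa [← hex x h1 h2]
    · have := @h i (by simpa using hi)
      simp [hei] at this
  · rw [← hd, ← Finset.sum_erase_add _ _ (Finset.mem_univ i),
      ← Finset.sum_erase_add _ _ (Finset.mem_erase.mpr ⟨hji, Finset.mem_univ j⟩),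
      ← Finset.sum_erase_add _ d (Finset.mem_univ i),
      ← Finset.sum_erase_add _ d (Finset.mem_erase.mpr ⟨hji, Finset.mem_univ j⟩), hei, hej,
      Finset.sum_congr rfl fun x hx => hex x (by simp at hx; tauto) (by simp at hx; tauto)]
    abel

end Hall

/-! ### The sum of all elements, and complete mappings -/

/-- A finite set of elements of order at most two, stable under translation by an involution `a`,
splits into pairs `{x, x + a}` of sum `a`. -/
theorem sum_eq_half_card_nsmul {G : Type*} [AddCommGroup G] [DecidableEq G] {a : G} (ha : a ≠ 0)
    (ha2 : a + a = 0)
    (S : Finset G) (hS : ∀ x ∈ S, x + a ∈ S ∧ x + x = 0) : ∑ x ∈ S, x = (S.card / 2) • a := by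
  induction hn : S.card using Nat.strong_induction_on generalizing S with
  | _ n ih =>
  rcases S.eq_empty_or_nonempty with rfl | ⟨v, hv⟩
  · simp at hn
    simp [← hn]
  have hva : v + a ∈ S.erase v := Finset.mem_erase.mpr ⟨by simpa using ha, (hS v hv).1⟩
  have hc : ((S.erase v).erase (v + a)).card + 2 = n := by
    rw [← hn, ← Finset.card_erase_add_one hv, ← Finset.card_erase_add_one hva]
  have h := ih _ (by omega) ((S.erase v).erase (v + a)) (fun x hx => by
    simp only [Finset.mem_erase] at hx ⊢
    refine ⟨⟨fun h => hx.2.1 (add_right_cancel h), fun h => hx.1 ?_, (hS x hx.2.2).1⟩,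
      (hS x hx.2.2).2⟩
    rw [← h, add_assoc, ha2, add_zero]) rfl
  rw [← Finset.sum_erase_add _ _ hv, ← Finset.sum_erase_add _ _ hva, h, ← hc,
    Nat.add_div_right _ two_pos, succ_nsmul, add_assoc]
  congr 1
  rw [add_right_comm, (hS v hv).2, zero_add]

/-- Let `N` be half the number of solutions of `x + x = 0`. Pairing by `a` and by `b`, the sum of all
elements equals both `N • a` and `N • b`; as `a ≠ b`, `N` is even and the sum vanishes. -/
theorem sum_univ_eq_zero {G : Type*} [AddCommGroup G] [Fintype G] {a b : G} (ha : a ≠ 0) (hb :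
    b ≠ 0)
    (hab : a ≠ b) (ha2 : a + a = 0) (hb2 : b + b = 0) : ∑ x : G, x = 0 := by
  classical
  rw [← Finset.sum_filter_add_sum_filter_not _ (fun x : G => x + x = 0)]
  have h1 : ∑ x : G with ¬ x + x = 0, x = 0 := by
    refine Finset.sum_involution (fun x _ => -x) (fun x _ => add_neg_cancel x) (fun x hx _ h => ?_)
      (fun x hx => ?_) (fun x _ => neg_neg x)
    · simp only [Finset.mem_filter] at hx
      refine hx.2 ?_
      nth_rewrite 1 [← h]
      simp
    · simp only [Finset.mem_filter, Finset.mem_univ, true_and] at hx ⊢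
      rwa [← neg_add, neg_eq_zero]
  rw [h1, add_zero]
  have key : ∀ c : G, c ≠ 0 → c + c = 0 → ∑ x : G with x + x = 0, x =
      ((Finset.univ.filter fun x : G => x + x = 0).card / 2) • c := fun c hc hc2 =>
    sum_eq_half_card_nsmul hc hc2 _ fun x hx => by
      simp only [Finset.mem_filter, Finset.mem_univ, true_and] at hx ⊢
      exact ⟨by rw [add_add_add_comm, hx, hc2, add_zero], hx⟩
  have hA := key a ha ha2
  have hB := key b hb hb2
  rcases Nat.even_or_odd' ((Finset.univ.filter fun x : G => x + x = 0).card / 2) with ⟨k, hk | hk⟩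
  · rw [hA, hk, mul_comm, mul_nsmul', two_nsmul, ha2, nsmul_zero]
  · rw [hA, hk, mul_comm, add_nsmul, mul_nsmul', two_nsmul, add_nsmul, mul_nsmul', two_nsmul] at hB
    simp [ha2, hb2] at hB
    exact absurd hB hab

theorem exists_complete {G : Type*} [AddCommGroup G] [Fintype G] (h : ∑ x : G, x = 0) :
    ∃ φ : G → G, Function.Bijective φ ∧ Function.Bijective fun x => x + φ x := by
  obtain ⟨α, β, hαβ⟩ := hall (fun x : G => x) h
  refine ⟨α, α.bijective, ?_⟩
  convert β.bijective using 2 with x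
  rw [hαβ, add_comm]

/-- `G` has at least two involutions. -/
def TwoInvolutions (G : Type*) [AddCommGroup G] : Prop :=
  ∃ a b : G, a ≠ 0 ∧ b ≠ 0 ∧ a ≠ b ∧ a + a = 0 ∧ b + b = 0

theorem TwoInvolutions.sum_eq_zero {G : Type*} [AddCommGroup G] [Fintype G]
    (h : TwoInvolutions G) : ∑ x : G, x = 0 := by
  obtain ⟨a, b, ha, hb, hab, ha2, hb2⟩ := h
  exact sum_univ_eq_zero ha hb hab ha2 hb2

theorem TwoInvolutions.exists_complete {G : Type*} [AddCommGroup G] [Finite G]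
    (h : TwoInvolutions G) :
    ∃ φ : G → G, Function.Bijective φ ∧ Function.Bijective fun x => x + φ x := by
  have := Fintype.ofFinite G
  exact _root_.exists_complete h.sum_eq_zero

/-! ### Partitions into cosets of a subgroup -/

/-- Complete mappings of `H` and `Γ ⧸ H` combine to one of `Γ` that permutes the cosets of `H`. Since
`|H|` kills `Γ` and `H` is zero-sum, every coset of `H` is zero-sum. -/
theorem hasZeroSumCMPartition_of_subgroup {Γ : Type*} [AddCommGroup Γ] [Fintype Γ] (H :
    AddSubgroup Γ)
    (m : ℕ) (hm : Nat.card H = m) (hexp : ∀ x : Γ, m • x = 0) (hH : TwoInvolutions H)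
    (hQ : ∃ ψ : Γ ⧸ H → Γ ⧸ H, Function.Bijective ψ ∧ Function.Bijective fun q => q + ψ q) :
    HasZeroSumCMPartition Γ m := by
  classical
  have := Fintype.ofFinite (Γ ⧸ H)
  have := Fintype.ofFinite H
  obtain ⟨ψ, hψ, hψ'⟩ := hQ
  obtain ⟨χ, hχ, hχ'⟩ := hH.exists_complete
  have hs : ∑ h : H, (h : Γ) = 0 := by
    rw [← AddSubgroup.val_finsetSum, hH.sum_eq_zero, AddSubgroup.coe_zero]
  have hsχ : ∑ h : H, (χ h : Γ) = 0 := by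
    rw [hχ.sum_comp (fun h : H => (h : Γ)), hs]
  -- every `x` is uniquely `r q + h` with `q` its class and `h = p x ∈ H`
  let r : Γ ⧸ H → Γ := Quotient.out
  have hr : ∀ q, (r q : Γ ⧸ H) = q := Quotient.out_eq
  have hrm : ∀ x : Γ, x - r x ∈ H := fun x => by
    rw [← QuotientAddGroup.eq_zero_iff, QuotientAddGroup.mk_sub, hr, sub_self]
  let p : Γ → H := fun x => ⟨x - r x, hrm x⟩
  have hx : ∀ x : Γ, x = r x + p x := fun x => by simp [p]
  have hmk : ∀ q (h : H), ((r q + h : Γ) : Γ ⧸ H) = q := fun q h => by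
    rw [QuotientAddGroup.mk_add, hr, (QuotientAddGroup.eq_zero_iff (h : Γ)).mpr h.2, add_zero]
  have hp : ∀ q (h : H), p (r q + h) = h := fun q h => by
    apply Subtype.ext
    simp only [p]
    rw [hmk]
    simp
  let φ : Γ → Γ := fun x => r (ψ x) + χ (p x)
  let ι : Γ ⧸ H → H ↪ Γ := fun q => (Function.Embedding.subtype _).trans (addLeftEmbedding (r q))
  have hι : ∀ q h, ι q h = r q + h := fun q h => rfl
  let T : Γ ⧸ H → Finset Γ := fun q => Finset.univ.map (ι q)
  have hT : ∀ q x, x ∈ T q ↔ (x : Γ ⧸ H) = q := fun q x => by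
    simp only [T, Finset.mem_map, Finset.mem_univ, true_and, hι]
    constructor
    · rintro ⟨h, rfl⟩
      exact hmk q h
    · rintro rfl
      exact ⟨p x, (hx x).symm⟩
  let e := (Fintype.equivFin (Γ ⧸ H)).symm
  refine ⟨φ, Fintype.card (Γ ⧸ H), fun i => T (e i), ?_, ?_, fun g => ?_, fun i => ?_, fun i => ?_,
    fun i => ?_⟩
  · rw [← Finite.injective_iff_bijective]
    intro x y hxy
    have h1 : (x : Γ ⧸ H) = y := hψ.1 (by
      rw [← hmk (ψ x) (χ (p x)), ← hmk (ψ y) (χ (p y))]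
      exact congrArg _ hxy)
    have h2 : p x = p y := hχ.1 (Subtype.ext (by
      simp only [φ, h1] at hxy
      exact add_left_cancel hxy))
    rw [hx x, hx y, h1, h2]
  · rw [← Finite.injective_iff_bijective]
    intro x y hxy
    have h1 : (x : Γ ⧸ H) = y := hψ'.1 (by
      have := congrArg (QuotientAddGroup.mk (s := H)) hxy
      simpa only [φ, QuotientAddGroup.mk_add _ x, QuotientAddGroup.mk_add _ y, hmk] using this)
    have h2 : p x = p y := hχ'.1 (Subtype.ext (by
      have h3 : r x + p x + (r (ψ x) + χ (p x)) = r y + p y + (r (ψ y) + χ (p y)) := by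
        rw [← hx, ← hx]
        exact hxy
      rw [h1, add_add_add_comm, add_add_add_comm (r y) (p y : Γ)] at h3
      exact add_left_cancel h3))
    rw [hx x, hx y, h1, h2]
  · refine ⟨e.symm g, by simp [hT], fun j hj => ?_⟩
    rw [(hT (e j) g).mp hj, Equiv.symm_apply_apply]
  · rw [Finset.card_map, Finset.card_univ, ← hm, Nat.card_eq_fintype_card]
  · rw [Finset.sum_map]
    simp only [hι]
    rw [Finset.sum_add_distrib, hs, Finset.sum_const, Finset.card_univ, ← Nat.card_eq_fintype_card,
      hm, hexp, add_zero]
  · rw [Finset.sum_map]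
    simp only [hι, φ, hmk, hp]
    rw [Finset.sum_add_distrib, hsχ, Finset.sum_const, Finset.card_univ,
      ← Nat.card_eq_fintype_card, hm, hexp, add_zero]

theorem HasZeroSumCMPartition.congr {G G' : Type*} [AddCommGroup G] [Fintype G] [AddCommGroup G']
    [Fintype G']
    (f : G ≃+ G') {m : ℕ} (h : HasZeroSumCMPartition G m) : HasZeroSumCMPartition G' m := by
  obtain ⟨φ, t, S, h1, h2, h3, h4, h5, h6⟩ := h
  refine ⟨fun x => f (φ (f.symm x)), t, fun i => (S i).map f.toEquiv.toEmbedding,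
    f.bijective.comp (h1.comp f.symm.bijective), ?_, fun g => ?_, fun i => ?_, fun i => ?_,
    fun i => ?_⟩
  · convert f.bijective.comp (h2.comp f.symm.bijective) using 2 with x
    simp
  · convert h3 (f.symm g) using 3 with i
    exact Finset.mem_map_equiv
  · rw [Finset.card_map, h4]
  · rw [Finset.sum_map]
    exact (map_sum f _ _).symm.trans (by rw [h5, map_zero])
  · rw [Finset.sum_map]
    simp [← map_sum, h6]

/-! ### The elementary group of order eight -/

/-- On `𝔽₂³` the companion matrix of `X³ + X + 1` is a complete mapping, and the two cosets of the plane
`v.1 = 0` form the partition. -/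
theorem hasZeroSumCMPartition_zmod_two_cube : HasZeroSumCMPartition
    (ZMod 2 × ZMod 2 × ZMod 2) 4 := by
  refine ⟨fun v => (v.2.1, v.2.2, v.1 + v.2.1), 2,
    fun i => Finset.univ.filter fun v => v.1 = (i.val : ZMod 2), ?_, ?_, ?_, ?_, ?_, ?_⟩
  · rw [← Finite.injective_iff_bijective]
    unfold Function.Injective
    decide
  · rw [← Finite.injective_iff_bijective]
    unfold Function.Injective
    decide
  · unfold ExistsUnique
    decide
  all_goals decide

theorem hasZeroSumCMPartition_of_card_eight {Γ : Type*} [AddCommGroup Γ] [Fintype Γ] (hc :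
    Fintype.card Γ = 8)
    (h2 : ∀ x : Γ, 2 • x = 0) : HasZeroSumCMPartition Γ 4 := by
  let _ : Module (ZMod 2) Γ := AddCommGroup.zmodModule h2
  have hf : Module.finrank (ZMod 2) (ZMod 2 × ZMod 2 × ZMod 2) = Module.finrank (ZMod 2) Γ := by
    have h := Module.card_eq_pow_finrank (K := ZMod 2) (V := Γ)
    rw [hc, ZMod.card, show 8 = 2 ^ 3 from rfl] at h
    rw [← Nat.pow_right_injective le_rfl h]
    simp
  exact hasZeroSumCMPartition_zmod_two_cube.congr (LinearEquiv.ofFinrankEq _ _ hf).toAddEquiv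

theorem twoInvolutions_iff {G : Type*} [AddCommGroup G] :
    TwoInvolutions G ↔ ∃ a b : {g : G // g ≠ 0 ∧ g + g = 0}, a ≠ b := by
  constructor
  · rintro ⟨a, b, ha, hb, hab, ha2, hb2⟩
    exact ⟨⟨a, ha, ha2⟩, ⟨b, hb, hb2⟩, fun h => hab (congrArg Subtype.val h)⟩
  · rintro ⟨⟨a, ha, ha2⟩, ⟨b, hb, hb2⟩, hab⟩
    exact ⟨a, b, ha, hb, fun h => hab (Subtype.ext h), ha2, hb2⟩

/-! ### Choice of the subgroup -/

/-- The subgroup `2G` of doubles, the image of `x ↦ 2x`. -/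
def doubles (G : Type*) [AddCommGroup G] : AddSubgroup G := (nsmulAddMonoidHom (α := G) 2).range

theorem mem_doubles {G : Type*} [AddCommGroup G] {x : G} : x ∈ doubles G ↔ ∃ y, 2 • y = x := Iff.rfl

/-- The kernel of doubling has the same cardinality as the cokernel. -/
theorem twoInvolutions_of_index {G : Type*} [AddCommGroup G] [Finite G]
    (h : 2 < (doubles G).index) : TwoInvolutions G := by
  classical
  have := Fintype.ofFinite G
  let D := nsmulAddMonoidHom (α := G) 2
  have h1 : Nat.card D.ker = (doubles G).index := by
    have e1 := D.ker.card_mul_index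
    rw [AddSubgroup.index_ker, ← (doubles G).card_mul_index, mul_comm] at e1
    exact Nat.eq_of_mul_eq_mul_left Nat.card_pos e1
  have h2 : Nat.card D.ker = (Finset.univ.filter fun x : G => x + x = 0).card := by
    rw [Nat.card_eq_fintype_card]
    refine Fintype.card_of_subtype _ fun x => ?_
    simp [D, AddMonoidHom.mem_ker, two_nsmul]
  have h3 : 1 < ((Finset.univ.filter fun x : G => x + x = 0).erase 0).card := by
    rw [Finset.card_erase_of_mem (by simp)]
    omega
  obtain ⟨a, ha, b, hb, hab⟩ := Finset.one_lt_card.mp h3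
  simp only [Finset.mem_erase, Finset.mem_filter, Finset.mem_univ, true_and] at ha hb
  exact ⟨a, b, ha.1, hb.1, hab, ha.2, hb.2⟩

theorem twoInvolutions_quotient {G : Type*} [AddCommGroup G] [Finite G] (H : AddSubgroup G)
    (h : 2 < (H ⊔ doubles G).index) : TwoInvolutions (G ⧸ H) := by
  apply twoInvolutions_of_index
  rw [← AddSubgroup.index_comap_of_surjective _ (QuotientAddGroup.mk'_surjective H)]
  convert h using 2
  ext x
  rw [AddSubgroup.mem_comap, mem_doubles, AddSubgroup.mem_sup]
  constructor
  · rintro ⟨y, hy⟩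
    obtain ⟨y, rfl⟩ := QuotientAddGroup.mk'_surjective H y
    refine ⟨x - 2 • y, ?_, 2 • y, ⟨y, rfl⟩, by abel⟩
    rw [← QuotientAddGroup.eq_zero_iff, QuotientAddGroup.mk_sub]
    exact sub_eq_zero.mpr hy.symm
  · rintro ⟨h, hh, _, ⟨y, rfl⟩, rfl⟩
    refine ⟨(y : G ⧸ H), ?_⟩
    rw [map_add]
    have : QuotientAddGroup.mk' H h = 0 := (QuotientAddGroup.eq_zero_iff h).mpr hh
    rw [this, zero_add]
    rfl

theorem exists_addSubgroup_ge {G : Type*} [AddCommGroup G] [Finite G] {i k : ℕ}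
    (hdvd : 2 ^ k ∣ Nat.card G) (K : AddSubgroup G) (hK : Nat.card K = 2 ^ i) (hik : i ≤ k) :
    ∃ H : AddSubgroup G, Nat.card H = 2 ^ k ∧ K ≤ H := by
  obtain ⟨H, hH, hKH⟩ := Sylow.exists_subgroup_card_pow_prime_le (G := Multiplicative G) 2
    (n := i) (m := k) hdvd (AddSubgroup.toSubgroup K) hK hik
  exact ⟨AddSubgroup.toSubgroup.symm H, hH, hKH⟩

theorem exists_addSubgroup_between {G : Type*} [AddCommGroup G] [Finite G] {i k : ℕ}
    (K P : AddSubgroup G) (hdvd : 2 ^ k ∣ Nat.card P) (hK : Nat.card K = 2 ^ i) (hik : i ≤ k)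
    (hKP : K ≤ P) :
    ∃ H : AddSubgroup G, Nat.card H = 2 ^ k ∧ K ≤ H ∧ H ≤ P := by
  obtain ⟨H, hH, hKH⟩ := exists_addSubgroup_ge hdvd (K.addSubgroupOf P) (by
    rw [← hK]
    exact Nat.card_congr (AddSubgroup.addSubgroupOfEquivOfLe hKP).toEquiv) hik
  refine ⟨H.map P.subtype, ?_, ?_, ?_⟩
  · rw [AddSubgroup.card_map_of_injective P.subtype_injective, hH]
  · intro x hx
    exact ⟨⟨x, hKP hx⟩, hKH hx, rfl⟩
  · rintro _ ⟨x, -, rfl⟩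
    exact x.2

theorem card_sup_le {G : Type*} [AddCommGroup G] [Finite G] (A B : AddSubgroup G) :
    Nat.card ↥(A ⊔ B) ≤ Nat.card A * Nat.card B := by
  rw [← Nat.card_prod]
  refine Nat.card_le_card_of_surjective (fun x : A × B => (⟨x.1 + x.2,
    AddSubgroup.add_mem_sup x.1.2 x.2.2⟩ : ↥(A ⊔ B))) ?_
  rintro ⟨x, hx⟩
  obtain ⟨a, ha, b, hb, rfl⟩ := AddSubgroup.mem_sup.mp hx
  exact ⟨(⟨a, ha⟩, ⟨b, hb⟩), rfl⟩

/-- Nakayama's lemma for a group killed by a power of two. -/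
theorem eq_top_of_sup_doubles {G : Type*} [AddCommGroup G] {n : ℕ} (hG : ∀ x : G, 2 ^ n • x = 0)
    (L : AddSubgroup G) (h : L ⊔ doubles G = ⊤) : L = ⊤ := by
  have key : ∀ (j : ℕ) (x : G), ∃ l ∈ L, ∃ y : G, l + 2 ^ j • y = x := by
    intro j
    induction j with
    | zero => exact fun x => ⟨0, L.zero_mem, x, by simp⟩
    | succ j ih =>
      intro x
      obtain ⟨l, hl, y, rfl⟩ := ih x
      obtain ⟨l', hl', _, ⟨z, rfl⟩, rfl⟩ := AddSubgroup.mem_sup.mp (h ▸ AddSubgroup.mem_top y)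
      refine ⟨l + 2 ^ j • l', L.add_mem hl (L.nsmul_mem hl' _), z, ?_⟩
      rw [nsmul_add, add_assoc, pow_succ, mul_nsmul']
      rfl
  refine (AddSubgroup.eq_top_iff' L).mpr fun x => ?_
  obtain ⟨l, hl, y, rfl⟩ := key n x
  rwa [hG, add_zero]

theorem exists_sup_zmultiples {G : Type*} [AddCommGroup G] [Finite G] (P : AddSubgroup G)
    (h : P.index ≤ 2) : ∃ g : G, AddSubgroup.zmultiples g ⊔ P = ⊤ := by
  have h0 : P.index ≠ 0 := AddSubgroup.FiniteIndex.index_ne_zero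
  rcases (by omega : P.index = 1 ∨ P.index = 2) with h1 | h1
  · exact ⟨0, by rw [AddSubgroup.index_eq_one.mp h1, sup_top_eq]⟩
  · obtain ⟨g, hg⟩ := AddSubgroup.index_eq_two_iff'.mp h1
    refine ⟨-g, (AddSubgroup.eq_top_iff' _).mpr fun x => AddSubgroup.mem_sup.mpr ?_⟩
    rcases hg x with ⟨h, -⟩ | ⟨h, -⟩
    · exact ⟨-g, AddSubgroup.mem_zmultiples _, g + x, h, by abel⟩
    · exact ⟨0, AddSubgroup.zero_mem _, x, h, zero_add x⟩

theorem natCard_zmultiples_le {G : Type*} [AddCommGroup G] {N : ℕ} (hN : 0 < N) {g : G}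
    (h : N • g = 0) : Nat.card (AddSubgroup.zmultiples g) ≤ N := by
  rw [Nat.card_zmultiples]
  exact addOrderOf_le_of_nsmul_eq_zero hN h

/-- In a noncyclic abelian group of order `2 ^ n` and exponent `2 ^ e ≤ 2 ^ (n - 2)`, some two
involutions `a`, `b` generate `K` with `K + 2G` of index greater than 2. With `b` divisible by
`2 ^ (e - 1)` and any `a`, an index at most 2 would give `G = ⟨c⟩ + K` for some `c`; this is too small
if `e = 1`, and otherwise `b ∈ ⟨c⟩`, so that `|G| = |⟨c⟩ + ⟨a⟩| ≤ 2 ^ (e + 1)`. -/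
theorem exists_klein {G : Type*} [AddCommGroup G] [Finite G] {n e : ℕ} (hn : 4 ≤ n)
    (hcard : Nat.card G = 2 ^ n) (he : AddMonoid.exponent G = 2 ^ e) (he1 : 1 ≤ e)
    (hen : e + 2 ≤ n) (hG : TwoInvolutions G) :
    ∃ a b : G, a ≠ 0 ∧ b ≠ 0 ∧ a ≠ b ∧ a + a = 0 ∧ b + b = 0 ∧
      2 < (AddSubgroup.zmultiples a ⊔ AddSubgroup.zmultiples b ⊔ doubles G).index := by
  have hexp : ∀ x : G, 2 ^ e • x = 0 := fun x => he ▸ AddMonoid.exponent_nsmul_eq_zero x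
  -- an involution divisible by `2 ^ (e - 1)`
  obtain ⟨g, hg⟩ : ∃ g : G, 2 ^ (e - 1) • g ≠ 0 := by
    by_contra! h
    rw [← AddMonoid.exponent_dvd_iff_forall_nsmul_eq_zero, he,
      Nat.pow_dvd_pow_iff_le_right (by norm_num)] at h
    omega
  set b := 2 ^ (e - 1) • g with hb
  have hb2 : b + b = 0 := by
    rw [← two_nsmul, hb, ← mul_nsmul', ← pow_succ', Nat.sub_add_cancel he1, hexp]
  obtain ⟨a, ha, hab, ha2⟩ : ∃ a : G, a ≠ 0 ∧ a ≠ b ∧ a + a = 0 := by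
    obtain ⟨x, y, hx, hy, hxy, hx2, hy2⟩ := hG
    by_cases h : x = b
    · exact ⟨y, hy, fun h' => hxy (h.trans h'.symm), hy2⟩
    · exact ⟨x, hx, h, hx2⟩
  refine ⟨a, b, ha, hg, hab, ha2, hb2, ?_⟩
  by_contra! hle
  obtain ⟨c, hc⟩ := exists_sup_zmultiples _ hle
  rw [← sup_assoc] at hc
  have hL := eq_top_of_sup_doubles hexp _ hc
  have hca := natCard_zmultiples_le (N := 2) two_pos ((two_nsmul a).trans ha2)
  have hcb := natCard_zmultiples_le (N := 2) two_pos ((two_nsmul b).trans hb2)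
  have hcc := natCard_zmultiples_le (Nat.two_pow_pos e) (hexp c)
  have htop : Nat.card (⊤ : AddSubgroup G) = 2 ^ n := by rw [AddSubgroup.card_top, hcard]
  rcases (by omega : e = 1 ∨ 2 ≤ e) with rfl | he2
  · have h1 := card_sup_le (AddSubgroup.zmultiples c)
      (AddSubgroup.zmultiples a ⊔ AddSubgroup.zmultiples b)
    rw [hL, htop] at h1
    have h2 := h1.trans (Nat.mul_le_mul hcc ((card_sup_le _ _).trans (Nat.mul_le_mul hca hcb)))
    have h3 : 2 ^ 4 ≤ 2 ^ n := Nat.pow_le_pow_right two_pos hn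
    omega
  · have hkill : ∀ z : G, z + z = 0 → 2 ^ (e - 1) • z = 0 := fun z hz => by
      rw [show e - 1 = e - 2 + 1 by omega, pow_succ, mul_nsmul', two_nsmul, hz, nsmul_zero]
    have hbc : b ∈ AddSubgroup.zmultiples c := by
      obtain ⟨x, hx, y, hy, hxy⟩ := AddSubgroup.mem_sup.mp (hL ▸ AddSubgroup.mem_top g)
      obtain ⟨y1, hy1, y2, hy2, rfl⟩ := AddSubgroup.mem_sup.mp hy
      obtain ⟨i, rfl⟩ := AddSubgroup.mem_zmultiples_iff.mp hy1
      obtain ⟨j, rfl⟩ := AddSubgroup.mem_zmultiples_iff.mp hy2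
      rw [hb, ← hxy, nsmul_add, nsmul_add, hkill (i • a) (by rw [← zsmul_add, ha2, zsmul_zero]),
        hkill (j • b) (by rw [← zsmul_add, hb2, zsmul_zero]), add_zero, add_zero]
      exact AddSubgroup.nsmul_mem _ hx _
    have hL' : AddSubgroup.zmultiples c ⊔ AddSubgroup.zmultiples a = ⊤ := by
      rw [← hL, sup_comm (AddSubgroup.zmultiples a), ← sup_assoc,
        sup_eq_left.mpr (AddSubgroup.zmultiples_le_of_mem hbc)]
    have h1 := card_sup_le (AddSubgroup.zmultiples c) (AddSubgroup.zmultiples a)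
    rw [hL', htop] at h1
    have h2 := h1.trans (Nat.mul_le_mul hcc hca)
    rw [← pow_succ, Nat.pow_le_pow_iff_right (by norm_num)] at h2
    omega

/-- A subgroup of order `2 ^ k` containing the Klein four-group `K` of `exists_klein`, chosen below
`K ⊔ doubles G` or above it according to size. -/
theorem exists_subgroup {G : Type*} [AddCommGroup G] [Finite G] {n e k : ℕ}
    (hcard : Nat.card G = 2 ^ n) (he : AddMonoid.exponent G = 2 ^ e) (he1 : 1 ≤ e)
    (hen : e + 2 ≤ n) (hk : 2 ≤ k) (hkn : k + 2 ≤ n) (hG : TwoInvolutions G) :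
    ∃ H : AddSubgroup G, Nat.card H = 2 ^ k ∧ TwoInvolutions H ∧ TwoInvolutions (G ⧸ H) := by
  obtain ⟨a, b, ha, hb, hab, ha2, hb2, hind⟩ := exists_klein (by omega) hcard he he1 hen hG
  set K := AddSubgroup.zmultiples a ⊔ AddSubgroup.zmultiples b with hK
  have hpow : ∀ A : AddSubgroup G, ∃ i ≤ n, Nat.card A = 2 ^ i := fun A =>
    (Nat.dvd_prime_pow Nat.prime_two).mp (hcard ▸ A.card_addSubgroup_dvd_card)
  obtain ⟨i, -, hi⟩ := hpow K
  obtain ⟨j, hjn, hj⟩ := hpow (K ⊔ doubles G)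
  have hik : i ≤ k := by
    have h1 := (card_sup_le (AddSubgroup.zmultiples a) (AddSubgroup.zmultiples b)).trans
      (Nat.mul_le_mul (natCard_zmultiples_le (N := 2) two_pos ((two_nsmul a).trans ha2))
        (natCard_zmultiples_le (N := 2) two_pos ((two_nsmul b).trans hb2)))
    rw [← hK, hi, show 2 * 2 = 2 ^ 2 from rfl, Nat.pow_le_pow_iff_right (by norm_num)] at h1
    omega
  obtain ⟨H, hH, hKH, hHd⟩ : ∃ H : AddSubgroup G, Nat.card H = 2 ^ k ∧ K ≤ H ∧
      2 < (H ⊔ doubles G).index := by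
    rcases le_total k j with hkj | hkj
    · obtain ⟨H, hH, hKH, hHP⟩ := exists_addSubgroup_between K (K ⊔ doubles G)
        (by rw [hj]; exact pow_dvd_pow 2 hkj) hi hik le_sup_left
      refine ⟨H, hH, hKH, ?_⟩
      rwa [le_antisymm (sup_le hHP le_sup_right) (sup_le_sup_right hKH _)]
    · obtain ⟨H, hH, hPH⟩ := exists_addSubgroup_ge (k := k)
        (by rw [hcard]; exact pow_dvd_pow 2 (by omega)) (K ⊔ doubles G) hj hkj
      refine ⟨H, hH, le_sup_left.trans hPH, ?_⟩
      rw [sup_eq_left.mpr (le_sup_right.trans hPH)]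
      have h1 := H.card_mul_index
      rw [hH, hcard, ← Nat.add_sub_cancel' (show k ≤ n by omega), pow_add] at h1
      rw [Nat.eq_of_mul_eq_mul_left (Nat.two_pow_pos k) h1]
      calc 2 < 2 ^ 2 := by norm_num
        _ ≤ 2 ^ (n - k) := Nat.pow_le_pow_right two_pos (by omega)
  refine ⟨H, hH, ⟨⟨a, hKH (AddSubgroup.mem_sup_left (AddSubgroup.mem_zmultiples a))⟩,
    ⟨b, hKH (AddSubgroup.mem_sup_right (AddSubgroup.mem_zmultiples b))⟩, ?_, ?_, ?_, ?_, ?_⟩,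
    twoInvolutions_quotient H hHd⟩
  all_goals simpa [Subtype.ext_iff]

theorem TwoInvolutions.not_isAddCyclic {G : Type*} [AddCommGroup G] [Finite G]
    (hG : TwoInvolutions G) : ¬ IsAddCyclic G := by
  classical
  intro h
  have := Fintype.ofFinite G
  obtain ⟨a, b, ha, hb, hab, ha2, hb2⟩ := hG
  have h1 := IsAddCyclic.card_nsmul_eq_zero_le (α := G) two_pos
  have h2 : ({0, a, b} : Finset G) ⊆ Finset.univ.filter fun x => 2 • x = 0 := by
    intro x hx
    simp only [Finset.mem_insert, Finset.mem_singleton] at hx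
    rcases hx with rfl | rfl | rfl <;> simp [two_nsmul, *]
  have h3 := Finset.card_le_card h2
  rw [Finset.card_eq_three.mpr ⟨0, a, b, ha.symm, hb.symm, hab, rfl⟩] at h3
  omega

theorem stmt1 {Γ : Type*} [AddCommGroup Γ] [Fintype Γ] (n : ℕ) (hn : 1 < n)
    (hcard : Fintype.card Γ = 2 ^ n) (hG : InClassG Γ) (m : ℕ)
    (hm : m = if AddMonoid.exponent Γ = Fintype.card Γ / 2 then 2 * AddMonoid.exponent Γ
          else max 4 (AddMonoid.exponent Γ)) :
    HasZeroSumCMPartition Γ m := by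
  have hcard' : Nat.card Γ = 2 ^ n := by rw [Nat.card_eq_fintype_card, hcard]
  have hT : TwoInvolutions Γ := by
    rcases hG with h | h
    · rw [hcard] at h
      exact absurd h (Nat.not_odd_iff_even.mpr ((Nat.even_pow' (by omega)).mpr even_two))
    · rw [twoInvolutions_iff]
      have := Finite.one_lt_card_iff_nontrivial.mp h
      exact exists_pair_ne _
  obtain ⟨e, hen, he⟩ := (Nat.dvd_prime_pow Nat.prime_two).mp
    (hcard ▸ AddGroup.exponent_dvd_card (G := Γ))
  have hexp : ∀ k, e ≤ k → ∀ x : Γ, 2 ^ k • x = 0 := fun k hk =>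
    AddMonoid.exponent_dvd_iff_forall_nsmul_eq_zero.mp (he ▸ pow_dvd_pow 2 hk)
  have hen' : e ≠ n := by
    rintro rfl
    exact hT.not_isAddCyclic (IsAddCyclic.iff_exponent_eq_card.mpr (he.trans hcard'.symm))
  have he1 : 1 ≤ e := by
    by_contra! h
    obtain ⟨a, -, ha, -⟩ := hT
    have := hexp 0 (by omega) a
    rw [pow_zero, one_nsmul] at this
    exact ha this
  have hhalf : Fintype.card Γ / 2 = 2 ^ (n - 1) := by
    rw [hcard, ← Nat.pow_div (by omega) two_pos, pow_one]
  rw [he, hhalf] at hm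
  by_cases hcase : e = n - 1
  -- the whole group is the only block
  · rw [if_pos (by rw [hcase]), hcase, ← pow_succ', Nat.sub_add_cancel hn.le] at hm
    subst hm
    refine hasZeroSumCMPartition_of_subgroup ⊤ _ (by rw [AddSubgroup.card_top, hcard']) (hexp n hen) ?_ ?_
    · obtain ⟨a, b, ha, hb, hab, ha2, hb2⟩ := hT
      refine ⟨⟨a, trivial⟩, ⟨b, trivial⟩, ?_, ?_, ?_, ?_, ?_⟩
      all_goals simpa [Subtype.ext_iff]
    · have : Subsingleton (Γ ⧸ (⊤ : AddSubgroup Γ)) := QuotientAddGroup.subsingleton_quotient_top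
      exact ⟨id, Function.bijective_id, fun x y _ => Subsingleton.elim x y,
        fun x => ⟨x, Subsingleton.elim _ _⟩⟩
  · rw [if_neg fun h => hcase (Nat.pow_right_injective le_rfl h)] at hm
    -- here a subgroup of order 4 has cyclic quotient `ℤ/2`, which has no complete mapping
    by_cases h3 : n = 3
    · subst h3
      obtain rfl : e = 1 := by omega
      rw [hm]
      exact hasZeroSumCMPartition_of_card_eight hcard (hexp 1 le_rfl)
    obtain ⟨k, hk, hek, hkn, rfl⟩ : ∃ k, 2 ≤ k ∧ e ≤ k ∧ k + 2 ≤ n ∧ m = 2 ^ k := by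
      rcases (by omega : e = 1 ∨ 2 ≤ e) with rfl | h
      · exact ⟨2, le_rfl, by omega, by omega, hm⟩
      · refine ⟨e, h, le_rfl, by omega, hm.trans (max_eq_right ?_)⟩
        exact Nat.pow_le_pow_right (n := 2) two_pos h
    obtain ⟨H, hH, hH1, hH2⟩ := exists_subgroup hcard' he he1 (by omega) hk hkn hT
    exact hasZeroSumCMPartition_of_subgroup H _ hH (hexp k hek) hH1 hH2.exists_complete
end
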